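/- arXiv:1112.2118 — 2 statements merged into one kernel-verified Lean document; each statement's English description precedes it below -/
import Mathlib

section
/- Let λ̄ = (λ₀,λ₁,λ₂) with each λᵢ > 0 and λ₀+λ₁+λ₂ = 1, and let λ = max(λ₀,λ₁,λ₂). Let a₀,a₁,a₂,c₀,c₁,c₂ > 0 satisfy aᵢ·cᵢ = λᵢ/λ for i = 0,1,2. Then for every ω̄ = (ω₀,ω₁,ω₂) with ωᵢ ≥ 0 and ω₀+ω₁+ω₂ = 1: Ψ(ω̄, λ̄, (a₀s, a₁s, a₂s), (c₀,c₁,c₂)) ≤ 3^{−γ} · OPT((a₀,a₁,a₂), (c₀,c₁,c₂), s). -/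
/-- `q(x) = exp(x) - x - 1`. -/
noncomputable def q (x : ℝ) : ℝ := Real.exp x - x - 1

/-- `Q(x) = x·(exp(x) − 1)/(exp(x) − x − 1)`. -/
noncomputable def Qf (x : ℝ) : ℝ := x * (Real.exp x - 1) / (Real.exp x - x - 1)

/-- `OPT(x₀,x₁,x₂,y₀,y₁,y₂,s) = OPT1 · OPT2 · OPT3` with `Q = Q(s)`. -/
noncomputable def OPT (x₀ x₁ x₂ y₀ y₁ y₂ s : ℝ) : ℝ :=
  ((q (s*x₀) + q (s*x₁) + q (s*x₂)) / q s) *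
  (1 / (x₀*y₀ + x₁*y₁ + x₂*y₂)) ^ (Qf s) *
  ((y₀+y₁+y₂) ^ (Qf s) +
    2 * (y₀^2 + y₁^2 + y₂^2 - y₀*y₁ - y₀*y₂ - y₁*y₂) ^ (Qf s / 2))

/-- `r(y₀,y₁,y₂) = Σ (k choose k₀,k₁,k₂)·y₀^{k₀}·y₁^{k₁}·y₂^{k₂}`, summed over all
`k₀+k₁+k₂ = k` with `k₁ ≡ k₂ (mod 3)`. -/
noncomputable def r (k : ℕ) (y₀ y₁ y₂ : ℝ) : ℝ :=
  ∑ t ∈ (Finset.Nat.antidiagonalTuple 3 k).filter (fun t => t 1 % 3 = t 2 % 3),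
    (Nat.multinomial Finset.univ t : ℝ) * y₀ ^ t 0 * y₁ ^ t 1 * y₂ ^ t 2

/-- `Ψ(ω̄,λ̄,x̄,ȳ)`; real powers are `rpow`, so the convention `0^0 = 1` holds. -/
noncomputable def Psi (k : ℕ) (γ s : ℝ) (ω lam x y : Fin 3 → ℝ) : ℝ :=
  (∏ i, (q (x i) / (ω i * q s)) ^ (ω i)) *
  ((∏ i, (lam i * s / (x i * y i)) ^ (lam i)) ^ ((k:ℝ) * γ)) *
  (r k (y 0) (y 1) (y 2)) ^ γ

/-!
Each of the three factors of `Psi` is compared with the matching factor of `OPT`.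

* Weighted AM-GM with weights `ω i` bounds the first factor by that of `OPT`.
* Since `a i * c i` is proportional to `λ i`, the second factor is a weighted geometric mean of a
  constant, and both second factors are the power `k * γ` of the proportionality constant.
* For a primitive cube root of unity `ζ`, the roots-of-unity filter gives
  `3 * r = (y₀ + y₁ + y₂) ^ k + 2 * Re ((y₀ + ζ * y₁ + ζ ^ 2 * y₂) ^ k)`. Bounding the real part by
  the modulus and using subadditivity of `x ↦ x ^ γ` for `γ ≤ 1` bounds the third factor.
-/

open Finset

section RootsOfUnityFilter

variable {R : Type*} [CommRing R] [IsDomain R] {ζ : R} {n : ℕ}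

theorem sum_range_pow_mul_of_isPrimitiveRoot (hζ : IsPrimitiveRoot ζ n) (m : ℕ) :
    ∑ j ∈ range n, ζ ^ (j * m) = if n ∣ m then (n : R) else 0 := by
  simp_rw [mul_comm _ m, pow_mul]
  split_ifs with hnm
  · simp [(hζ.pow_eq_one_iff_dvd m).2 hnm]
  · have hne : ζ ^ m - 1 ≠ 0 := sub_ne_zero.2 fun h => hnm ((hζ.pow_eq_one_iff_dvd m).1 h)
    refine (mul_eq_zero.1 ?_).resolve_left hne
    rw [mul_geom_sum, pow_right_comm, hζ.pow_eq_one, one_pow, sub_self]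

theorem sum_range_twisted_sum_pow_of_isPrimitiveRoot {ι : Type*} [DecidableEq ι]
    (hζ : IsPrimitiveRoot ζ n) (s : Finset ι) (e : ι → ℕ) (x : ι → R) (k : ℕ) :
    ∑ j ∈ range n, (∑ i ∈ s, ζ ^ (j * e i) * x i) ^ k =
      n * ∑ t ∈ s.piAntidiag k with n ∣ ∑ i ∈ s, e i * t i,
        (Nat.multinomial s t : R) * ∏ i ∈ s, x i ^ t i := by
  have expand_term (j : ℕ) (t : ι → ℕ) :
      ∏ i ∈ s, (ζ ^ (j * e i) * x i) ^ t i =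
        ζ ^ (j * ∑ i ∈ s, e i * t i) * ∏ i ∈ s, x i ^ t i := by
    simp_rw [mul_pow, prod_mul_distrib, ← pow_mul, prod_pow_eq_pow_sum, mul_sum, mul_assoc]
  simp_rw [sum_pow_eq_sum_piAntidiag, expand_term]
  rw [sum_comm, sum_filter, mul_sum]
  refine sum_congr rfl fun t _ => ?_
  rw [← mul_sum, ← sum_mul, sum_range_pow_mul_of_isPrimitiveRoot hζ]
  split_ifs <;> ring

end RootsOfUnityFilter

theorem prod_div_rpow_le_sum {ι : Type*} (s : Finset ι) {w z : ι → ℝ} (hw : ∀ i ∈ s, 0 ≤ w i)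
    (hw_sum : ∑ i ∈ s, w i = 1) (hz : ∀ i ∈ s, 0 ≤ z i) :
    ∏ i ∈ s, (z i / w i) ^ w i ≤ ∑ i ∈ s, z i := by
  -- Only an inequality: a term with `w i = 0` is `0`, by `z i / 0 = 0`.
  have hterm (i : ι) (hi : i ∈ s) : w i * (z i / w i) ≤ z i := by
    rcases eq_or_ne (w i) 0 with hwi | hwi
    · simpa [hwi] using hz i hi
    · exact (mul_div_cancel₀ (z i) hwi).le
  calc
    ∏ i ∈ s, (z i / w i) ^ w i ≤ ∑ i ∈ s, w i * (z i / w i) :=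
      Real.geom_mean_le_arith_mean_weighted s w _ hw hw_sum
        fun i hi => div_nonneg (hz i hi) (hw i hi)
    _ ≤ ∑ i ∈ s, z i := sum_le_sum hterm

/-- The norm form `|y₀ + ζ y₁ + ζ² y₂|²` of a primitive cube root of unity `ζ`; it is the quadratic
form in the third factor of `OPT`. -/
def cubeRootNormForm (y₀ y₁ y₂ : ℝ) : ℝ :=
  y₀ ^ 2 + y₁ ^ 2 + y₂ ^ 2 - y₀ * y₁ - y₀ * y₂ - y₁ * y₂

section CubeRoot

variable {ζ : ℂ} (y₀ y₁ y₂ : ℝ)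

open ComplexConjugate

theorem conj_eq_sq_of_isPrimitiveRoot_three (hζ : IsPrimitiveRoot ζ 3) : conj ζ = ζ ^ 2 := by
  rw [← Complex.inv_eq_conj (hζ.norm'_eq_one three_ne_zero)]
  exact inv_eq_of_mul_eq_one_right (by rw [← hζ.pow_eq_one]; ring)

theorem conj_add_mul_add_sq_mul (hζ : IsPrimitiveRoot ζ 3) :
    conj ((y₀ : ℂ) + ζ * y₁ + ζ ^ 2 * y₂) = y₀ + ζ ^ 2 * y₁ + ζ ^ 4 * y₂ := by
  simp only [map_add, map_mul, map_pow, Complex.conj_ofReal,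
    conj_eq_sq_of_isPrimitiveRoot_three hζ, ← pow_mul]

theorem norm_sq_add_mul_add_sq_mul (hζ : IsPrimitiveRoot ζ 3) :
    ‖(y₀ : ℂ) + ζ * y₁ + ζ ^ 2 * y₂‖ ^ 2 = cubeRootNormForm y₀ y₁ y₂ := by
  have hζ_sum : 1 + ζ + ζ ^ 2 = 0 := by
    simpa [sum_range_succ] using hζ.geom_sum_eq_zero (by norm_num)
  have hζ_cube := hζ.pow_eq_one
  apply Complex.ofReal_injective
  push_cast [cubeRootNormForm]
  rw [← Complex.mul_conj', conj_add_mul_add_sq_mul _ _ _ hζ]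
  linear_combination (y₀ * y₁ + y₀ * y₂ + y₁ * y₂) * hζ_sum +
    (y₁ ^ 2 + (ζ ^ 3 + 1) * y₂ ^ 2 + ζ * y₀ * y₂ + (ζ + ζ ^ 2) * y₁ * y₂) * hζ_cube

theorem cubeRootNormForm_nonneg : 0 ≤ cubeRootNormForm y₀ y₁ y₂ := by
  unfold cubeRootNormForm
  nlinarith [sq_nonneg (y₀ - y₁), sq_nonneg (y₀ - y₂), sq_nonneg (y₁ - y₂)]

end CubeRoot

section FilteredMultinomialSum

variable (k : ℕ) (y₀ y₁ y₂ : ℝ)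

theorem ofReal_r_eq_sum_piAntidiag :
    (r k y₀ y₁ y₂ : ℂ) = ∑ t ∈ piAntidiag univ k with 3 ∣ ∑ i, ![0, 1, 2] i * t i,
      (Nat.multinomial univ t : ℂ) * ∏ i, (![(y₀ : ℂ), y₁, y₂] i) ^ t i := by
  rw [piAntidiag_univ_fin_eq_antidiagonalTuple, r]
  push_cast
  refine sum_congr (filter_congr fun t _ => ?_) fun t _ => ?_
  · suffices t 1 % 3 = t 2 % 3 ↔ 3 ∣ t 1 + 2 * t 2 by simpa [Fin.sum_univ_three]
    omega
  · simp [Fin.prod_univ_three, mul_assoc]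

theorem three_mul_r_eq {ζ : ℂ} (hζ : IsPrimitiveRoot ζ 3) :
    3 * r k y₀ y₁ y₂ =
      (y₀ + y₁ + y₂) ^ k + 2 * (((y₀ : ℂ) + ζ * y₁ + ζ ^ 2 * y₂) ^ k).re := by
  have hfilter : ((y₀ : ℂ) + y₁ + y₂) ^ k + (y₀ + ζ * y₁ + ζ ^ 2 * y₂) ^ k +
      (y₀ + ζ ^ 2 * y₁ + ζ ^ 4 * y₂) ^ k = 3 * r k y₀ y₁ y₂ := by
    rw [ofReal_r_eq_sum_piAntidiag]
    simpa [sum_range_succ, Fin.sum_univ_three] using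
      sum_range_twisted_sum_pow_of_isPrimitiveRoot hζ univ ![0, 1, 2] ![(y₀ : ℂ), y₁, y₂] k
  apply Complex.ofReal_injective
  push_cast
  rw [← hfilter, ← Complex.ofReal_ofNat, ← Complex.ofReal_mul, ← Complex.add_conj, map_pow,
    conj_add_mul_add_sq_mul _ _ _ hζ, add_assoc]

theorem three_mul_r_le :
    3 * r k y₀ y₁ y₂ ≤ (y₀ + y₁ + y₂) ^ k + 2 * cubeRootNormForm y₀ y₁ y₂ ^ ((k : ℝ) / 2) := by
  obtain ⟨ζ, hζ⟩ : ∃ ζ : ℂ, IsPrimitiveRoot ζ 3 := ⟨_, Complex.isPrimitiveRoot_exp 3 three_ne_zero⟩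
  have hnorm : √(cubeRootNormForm y₀ y₁ y₂) = ‖(y₀ : ℂ) + ζ * y₁ + ζ ^ 2 * y₂‖ := by
    rw [← norm_sq_add_mul_add_sq_mul y₀ y₁ y₂ hζ, Real.sqrt_sq (norm_nonneg _)]
  rw [three_mul_r_eq k y₀ y₁ y₂ hζ, Real.rpow_div_two_eq_sqrt _ (cubeRootNormForm_nonneg y₀ y₁ y₂),
    Real.rpow_natCast, hnorm, ← norm_pow]
  gcongr
  exact Complex.re_le_norm _

variable {y₀ y₁ y₂}

theorem r_nonneg (h₀ : 0 ≤ y₀) (h₁ : 0 ≤ y₁) (h₂ : 0 ≤ y₂) : 0 ≤ r k y₀ y₁ y₂ :=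
  sum_nonneg fun t _ => by positivity

theorem r_rpow_le {γ : ℝ} (hγ : γ ∈ Set.Icc (0 : ℝ) 1) (h₀ : 0 ≤ y₀) (h₁ : 0 ≤ y₁)
    (h₂ : 0 ≤ y₂) :
    r k y₀ y₁ y₂ ^ γ ≤ (3 : ℝ) ^ (-γ) *
      ((y₀ + y₁ + y₂) ^ (k * γ) + 2 * cubeRootNormForm y₀ y₁ y₂ ^ (k * γ / 2)) := by
  have hN := cubeRootNormForm_nonneg y₀ y₁ y₂
  have hr := r_nonneg k h₀ h₁ h₂
  set S := y₀ + y₁ + y₂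
  set M := cubeRootNormForm y₀ y₁ y₂ ^ ((k : ℝ) / 2)
  have hM : 0 ≤ M := by positivity
  have hSk : 0 ≤ S ^ k := by positivity
  have hS_rpow : S ^ (k * γ) = (S ^ k) ^ γ := by
    rw [Real.rpow_mul (by positivity), Real.rpow_natCast]
  have hM_rpow : cubeRootNormForm y₀ y₁ y₂ ^ (k * γ / 2) = M ^ γ := by
    rw [← Real.rpow_mul hN]
    ring_nf
  rw [hS_rpow, hM_rpow, Real.rpow_neg zero_le_three, inv_mul_eq_div,
    le_div_iff₀' (by positivity)]
  calc
    3 ^ γ * r k y₀ y₁ y₂ ^ γ = (3 * r k y₀ y₁ y₂) ^ γ := (Real.mul_rpow zero_le_three hr).symm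
    _ ≤ (S ^ k + (M + M)) ^ γ :=
      Real.rpow_le_rpow (by positivity) (by linarith [three_mul_r_le k y₀ y₁ y₂]) hγ.1
    _ ≤ (S ^ k) ^ γ + (M + M) ^ γ := Real.rpow_add_le_add_rpow hSk (by positivity) hγ.1 hγ.2
    _ ≤ (S ^ k) ^ γ + (M ^ γ + M ^ γ) := by
      gcongr
      exact Real.rpow_add_le_add_rpow hM hM hγ.1 hγ.2
    _ = (S ^ k) ^ γ + 2 * M ^ γ := by ring

end FilteredMultinomialSum

theorem q_nonneg (x : ℝ) : 0 ≤ q x := by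
  unfold q
  linarith [Real.add_one_le_exp x]

section PsiFactors

variable {ι : Type*} [Fintype ι] (s : ℝ)

theorem prod_q_div_rpow_le (x : ι → ℝ) {ω : ι → ℝ} (hω : ∀ i, 0 ≤ ω i) (hω_sum : ∑ i, ω i = 1) :
    ∏ i, (q (x i) / (ω i * q s)) ^ ω i ≤ (∑ i, q (x i)) / q s := by
  simp_rw [div_mul_eq_div_div_swap, sum_div]
  exact prod_div_rpow_le_sum univ (fun i _ => hω i) hω_sum
    fun i _ => div_nonneg (q_nonneg _) (q_nonneg s)

variable {s} {lam a c : ι → ℝ} {L : ℝ}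

theorem prod_rpow_eq_of_mul_eq_div (hs : s ≠ 0) (hlam : ∀ i, lam i ≠ 0) (hlam_sum : ∑ i, lam i = 1)
    (hL : 0 < L) (hac : ∀ i, a i * c i = lam i / L) :
    ∏ i, (lam i * s / (a i * s * c i)) ^ lam i = L := by
  have hratio (i : ι) : lam i * s / (a i * s * c i) = L := by
    have := hlam i
    rw [mul_right_comm, hac]
    field_simp
  simp_rw [hratio]
  rw [← Real.rpow_sum_of_pos hL, hlam_sum, Real.rpow_one]

theorem one_div_sum_eq_of_mul_eq_div (hlam_sum : ∑ i, lam i = 1)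
    (hac : ∀ i, a i * c i = lam i / L) : 1 / ∑ i, a i * c i = L := by
  simp_rw [hac, ← sum_div, hlam_sum, one_div_one_div]

end PsiFactors

theorem stmt10_general (k : ℕ) (γ : ℝ) (hγ : γ ∈ Set.Icc (0 : ℝ) 1) (s : ℝ) (hs : s ≠ 0)
    (hQs : Qf s = k * γ) (lam : Fin 3 → ℝ) (hlam : ∀ i, 0 < lam i)
    (hlamsum : lam 0 + lam 1 + lam 2 = 1) (L : ℝ) (hL : 0 < L) (a c : Fin 3 → ℝ)
    (hc : ∀ i, 0 < c i) (hac : ∀ i, a i * c i = lam i / L) (ω : Fin 3 → ℝ) (hω : ∀ i, 0 ≤ ω i)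
    (hωsum : ω 0 + ω 1 + ω 2 = 1) :
    Psi k γ s ω lam (fun i => a i * s) c ≤
      (3 : ℝ) ^ (-γ) * OPT (a 0) (a 1) (a 2) (c 0) (c 1) (c 2) s := by
  rw [← Fin.sum_univ_three] at hlamsum hωsum
  have hq_factor := prod_q_div_rpow_le s (fun i => a i * s) hω hωsum
  have hlam_factor := prod_rpow_eq_of_mul_eq_div hs (fun i => (hlam i).ne') hlamsum hL hac
  have hOPT_factor := one_div_sum_eq_of_mul_eq_div hlamsum hac
  have hr_factor := r_rpow_le k hγ (hc 0).le (hc 1).le (hc 2).le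
  have hr := r_nonneg k (hc 0).le (hc 1).le (hc 2).le
  have hq_sum : 0 ≤ (∑ i, q (a i * s)) / q s :=
    div_nonneg (sum_nonneg fun i _ => q_nonneg _) (q_nonneg s)
  calc
    Psi k γ s ω lam (fun i => a i * s) c
      = (∏ i, (q (a i * s) / (ω i * q s)) ^ ω i) * L ^ (k * γ) * r k (c 0) (c 1) (c 2) ^ γ := by
      rw [Psi, hlam_factor]
    _ ≤ (∑ i, q (a i * s)) / q s * L ^ (k * γ) * ((3 : ℝ) ^ (-γ) * ((c 0 + c 1 + c 2) ^ (k * γ) +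
          2 * cubeRootNormForm (c 0) (c 1) (c 2) ^ (k * γ / 2))) := by
      gcongr
    _ = (3 : ℝ) ^ (-γ) * OPT (a 0) (a 1) (a 2) (c 0) (c 1) (c 2) s := by
      rw [Fin.sum_univ_three] at hOPT_factor ⊢
      rw [OPT, hOPT_factor, hQs, cubeRootNormForm, mul_comm s, mul_comm s, mul_comm s]
      ring

theorem stmt10 (k : ℕ) (hk : 3 ≤ k) (γ : ℝ) (hγ : γ ∈ Set.Ioo (0:ℝ) 1)
    (hkγ : 2 < (k:ℝ) * γ) (s : ℝ) (hs : 0 < s) (hQs : Qf s = (k:ℝ) * γ)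
    (lam : Fin 3 → ℝ) (hlam : ∀ i, 0 < lam i) (hlamsum : lam 0 + lam 1 + lam 2 = 1)
    (a c : Fin 3 → ℝ) (ha : ∀ i, 0 < a i) (hc : ∀ i, 0 < c i)
    (hac : ∀ i, a i * c i = lam i / max (lam 0) (max (lam 1) (lam 2))) :
    ∀ ω : Fin 3 → ℝ, (∀ i, 0 ≤ ω i) → ω 0 + ω 1 + ω 2 = 1 →
      Psi k γ s ω lam (fun i => a i * s) c ≤
        (3:ℝ) ^ (-γ) * OPT (a 0) (a 1) (a 2) (c 0) (c 1) (c 2) s := by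
  exact stmt10_general k γ (Set.Ioo_subset_Icc_self hγ) s hs.ne' hQs lam hlam hlamsum _
    (lt_max_of_lt_left (hlam 0)) a c hc hac
end

section
/- Let k ≥ 16 be an integer and ε ∈ (0,1). There exists a constant C = C(k,ε) > 0 such that for all positive integers n and m with m ≤ (1−ε)·n and km/n > 2, if the unique s > 0 with Q(s) = km/n satisfies s ≥ 15, then Σ N(w̄,l̄)/N₀ ≤ C·3^{n−m}, where the sum ranges over all w̄ = (w₀,w₁,w₂) ∈ ℕ³ with w₀+w₁+w₂ = n and all l̄ = (l₀,l₁,l₂) ∈ ℕ³ with l₀+l₁+l₂ = km. -/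
/-- `M(m,n) = Σ m!/(v₁!⋯v_n!)`, the sum over all tuples `(v₁,…,v_n) ∈ ℕⁿ`
with all `vᵢ ≥ 2` and `v₁ + ⋯ + v_n = m`. -/
def M (m n : ℕ) : ℕ :=
  ∑ v ∈ (Finset.Nat.antidiagonalTuple n m).filter (fun v => ∀ i, 2 ≤ v i),
    Nat.multinomial Finset.univ v

/-- `K(l̄)`: the sum over all `3 × m` matrices of nonnegative integers whose columns
sum to `k`, whose row `i` sums to `l i`, and with `k_{1j} ≡ k_{2j} (mod 3)` for every
column `j`, of the product over columns of the multinomial coefficients.  (Entries are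
encoded in `Fin (k+1)` since each entry is at most `k`.) -/
def Kl (k m : ℕ) (l : Fin 3 → ℕ) : ℕ :=
  ∑ A ∈ (Finset.univ : Finset (Fin 3 → Fin m → Fin (k+1))).filter
      (fun A => (∀ j, ((A 0 j : ℕ) + (A 1 j : ℕ) + (A 2 j : ℕ) = k)) ∧
        (∀ i, ∑ j, (A i j : ℕ) = l i) ∧
        (∀ j, (A 1 j : ℕ) % 3 = (A 2 j : ℕ) % 3)),
    ∏ j, Nat.multinomial Finset.univ (fun i => (A i j : ℕ))

/-- `N(w̄,l̄) = (n choose w₀,w₁,w₂)·K(l̄)·M(l₀,w₀)·M(l₁,w₁)·M(l₂,w₂)`. -/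
def Nwl (k m : ℕ) (w l : Fin 3 → ℕ) : ℕ :=
  Nat.multinomial Finset.univ w * Kl k m l * M (l 0) (w 0) * M (l 1) (w 1) * M (l 2) (w 2)

/-!
`∑ N(w̄, l̄)` counts the pairs `(x, σ)` of a colouring `x : Fin n → ZMod 3` of `n` boxes and a
placement `σ : Fin m × Fin k → Fin n` with at least two balls in every box such that the colours
seen by each block `{j} × Fin k` of balls sum to zero. For fixed `σ` the colourings form the
kernel of an `m × n` matrix over `ZMod 3`, and comparing it with the kernel of the transpose
gives `(∑ N) * 3 ^ m = 3 ^ n * ∑ y, b(y)`, where `b(y)` is the number of placements for which the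
labels `y : Fin m → ZMod 3` sum to zero in every box. The word `y = 0` contributes exactly `N₀`,
and the claim is that the others contribute `O(N₀)`.

With `f(z) = exp z - 1 - z` and `n * Q(s) = k * m`, log-concavity of the coefficients of `f ^ n`
gives `f(s) ^ n * (km)! / s ^ (km) ≤ O(n) * N₀`. Multivariate exponential generating functions,
evaluated at the same radius `s`, bound `b(y)` in terms of this quantity and the proportion `p`
of nonzero letters of `y`.

* If `s * p ≥ 1 / 20`, counting the balls in a box by their label in `ZMod 3` yields a factor
  `g ^ n`, where `g` is at most a constant below one and `g ^ m` outweighs the number of words of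
  that weight, estimated by the ternary entropy of `p`. The remaining `g ^ (n - m)` absorbs all
  polynomial factors because `n - m ≥ ε * n`.
* If `s * p ≤ 1 / 20`, it suffices that no box contains exactly one ball with a nonzero label;
  the sums over words of a given weight then decay geometrically in the weight.
-/

open Finset

section Fibers

variable {S V ι : Type*} [Fintype S] [DecidableEq V]

/-- The occupancy numbers of `σ`, thought of as a placement of the balls `S` into the boxes `V`. -/
def fiberCard (σ : S → V) (v : V) : ℕ := #{a | σ a = v}

/-- Every box `v : V` receives at least two balls; these are the placements counted by `M`. -/
def TwoLeFibers (σ : S → V) : Prop := ∀ v, 2 ≤ fiberCard σ v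

instance [Fintype V] (σ : S → V) : Decidable (TwoLeFibers σ) :=
  inferInstanceAs (Decidable (∀ v, 2 ≤ fiberCard σ v))

/-- A map `σ` lying over `lam` through `x`, i.e. with `x ∘ σ = lam`, amounts to a family of maps
between the fibers of `lam` and of `x`. -/
def fiberwiseEquiv (x : V → ι) (lam : S → ι) :
    {σ : S → V // ∀ a, x (σ a) = lam a} ≃ (∀ i, {a // lam a = i} → {v // x v = i}) where
  toFun σ i a := ⟨σ.1 a, (σ.2 a).trans a.2⟩
  invFun τ := ⟨fun a ↦ τ (lam a) ⟨a, rfl⟩, fun a ↦ (τ (lam a) ⟨a, rfl⟩).2⟩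
  left_inv _ := rfl
  right_inv τ := by
    funext i ⟨a, ha⟩
    subst ha
    rfl

theorem fiberCard_fiberwiseEquiv [DecidableEq ι] (x : V → ι) (lam : S → ι)
    (σ : {σ : S → V // ∀ a, x (σ a) = lam a}) (v : V) :
    fiberCard (fiberwiseEquiv x lam σ (x v)) ⟨v, rfl⟩ = fiberCard σ.1 v := by
  refine card_bij (fun a _ ↦ a.1) ?_ (fun _ _ _ _ ↦ Subtype.ext) fun b hb ↦ ?_
  · simp [fiberwiseEquiv]
  · have hb : σ.1 b = v := by simpa using hb
    exact ⟨⟨b, by rw [← σ.2, hb]⟩, by simp [fiberwiseEquiv, hb], rfl⟩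

variable [Fintype V]

theorem sum_fiberCard (σ : S → V) : ∑ v, fiberCard σ v = Fintype.card S :=
  (card_eq_sum_card_fiberwise (f := σ) (t := univ) (by simp)).symm

theorem prod_comp_eq_prod_pow_fiberCard {R : Type*} [CommMonoid R] (σ : S → V) (f : V → R) :
    ∏ a, f (σ a) = ∏ v, f v ^ fiberCard σ v := by
  rw [← prod_fiberwise univ σ]
  refine prod_congr rfl fun v _ ↦ ?_
  rw [fiberCard, ← prod_const]
  exact prod_congr rfl fun a ha ↦ by rw [(mem_filter.1 ha).2]

theorem card_filter_fiberCard_eq [DecidableEq S] (D : V → ℕ) (hD : ∑ v, D v = Fintype.card S) :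
    #{σ : S → V | fiberCard σ = D} = Nat.multinomial univ D := by
  have monomial_fun (E : V → ℕ) (c : ℕ) :
      MvPolynomial.monomial (Finsupp.equivFunOnFinite.symm E) c
        = (c : MvPolynomial V ℕ) * ∏ v, MvPolynomial.X v ^ E v := by
    rw [MvPolynomial.monomial_eq, Finsupp.prod_fintype _ _ (by simp)]
    simp
  have expansions : ∑ σ : S → V, MvPolynomial.monomial
        (Finsupp.equivFunOnFinite.symm (fiberCard σ)) 1
      = ∑ E ∈ piAntidiag univ (Fintype.card S), MvPolynomial.monomial
        (Finsupp.equivFunOnFinite.symm E) (Nat.multinomial univ E) := by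
    simp only [monomial_fun, Nat.cast_one, one_mul, ← prod_comp_eq_prod_pow_fiberCard]
    rw [← sum_pow_eq_sum_piAntidiag, ← Fintype.piFinset_univ, ← prod_univ_sum, prod_const,
      card_univ]
  have coeffs := congrArg (MvPolynomial.coeff (Finsupp.equivFunOnFinite.symm D)) expansions
  simp only [MvPolynomial.coeff_sum, MvPolynomial.coeff_monomial,
    EmbeddingLike.apply_eq_iff_eq, sum_boole, sum_ite_eq'] at coeffs
  rw [if_pos (by simp [hD])] at coeffs
  exact_mod_cast coeffs

theorem M_eq_card_of_fin [DecidableEq S] (n : ℕ) :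
    M (Fintype.card S) n = #{σ : S → Fin n | TwoLeFibers σ} := by
  rw [M, card_eq_sum_card_fiberwise (f := fiberCard)
    (t := {v ∈ Finset.Nat.antidiagonalTuple n (Fintype.card S) | ∀ i, 2 ≤ v i})]
  · refine sum_congr rfl fun D hD ↦ ?_
    obtain ⟨hsum, hD⟩ := by simpa only [mem_filter, Finset.Nat.mem_antidiagonalTuple] using hD
    rw [← card_filter_fiberCard_eq (S := S) D hsum, filter_filter]
    congr! 2 with σ
    exact ⟨fun h ↦ ⟨fun v ↦ by rw [h]; exact hD v, h⟩, And.right⟩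
  · intro σ hσ
    exact mem_filter.2 ⟨Finset.Nat.mem_antidiagonalTuple.2 (sum_fiberCard σ), (mem_filter.1 hσ).2⟩

theorem M_card_eq_card_twoLeFibers [DecidableEq S] :
    M (Fintype.card S) (Fintype.card V) = #{σ : S → V | TwoLeFibers σ} := by
  rw [M_eq_card_of_fin]
  refine (card_equiv ((Equiv.refl S).arrowCongr (Fintype.equivFin V)) fun σ ↦ ?_).symm
  rw [mem_filter_univ, mem_filter_univ, TwoLeFibers, TwoLeFibers,
    ← (Fintype.equivFin V).forall_congr_right]
  simp [fiberCard]

theorem card_twoLeFibers_over [DecidableEq S] [Fintype ι] [DecidableEq ι]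
    (x : V → ι) (lam : S → ι) :
    #{σ : S → V | TwoLeFibers σ ∧ ∀ a, x (σ a) = lam a}
      = ∏ i, M (fiberCard lam i) (fiberCard x i) := by
  have factor (i : ι) : M (fiberCard lam i) (fiberCard x i)
      = #{τ : {a // lam a = i} → {v // x v = i} | TwoLeFibers τ} := by
    rw [← M_card_eq_card_twoLeFibers, Fintype.card_subtype, Fintype.card_subtype, fiberCard,
      fiberCard]
  have over_iff (σ : {σ : S → V // ∀ a, x (σ a) = lam a}) :
      (∀ i, TwoLeFibers (fiberwiseEquiv x lam σ i)) ↔ TwoLeFibers σ.1 := by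
    refine ⟨fun h v ↦ fiberCard_fiberwiseEquiv x lam σ v ▸ h (x v) ⟨v, rfl⟩, ?_⟩
    rintro h i ⟨v, rfl⟩
    exact (fiberCard_fiberwiseEquiv x lam σ v).symm ▸ h v
  simp only [factor]
  rw [← Fintype.card_piFinset]
  refine card_bij (fun σ hσ ↦ fiberwiseEquiv x lam ⟨σ, (mem_filter.1 hσ).2.2⟩) ?_ ?_ ?_
  · intro σ hσ
    simpa only [Fintype.mem_piFinset, mem_filter_univ, over_iff] using (mem_filter.1 hσ).2.1
  · intro σ _ τ _ h
    simpa using h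
  · intro τ hτ
    obtain ⟨σ, rfl⟩ := (fiberwiseEquiv x lam).surjective τ
    simp only [Fintype.mem_piFinset, mem_filter_univ, over_iff] at hτ
    exact ⟨σ.1, by simpa using ⟨hτ, σ.2⟩, rfl⟩

end Fibers

/-! ### The double sum as a count of pairs -/

theorem sum_zmod_three_eq_zero_iff {T : Type*} [Fintype T] (f : T → ZMod 3) :
    ∑ t, f t = 0 ↔ fiberCard f 1 % 3 = fiberCard f 2 % 3 := by
  have sum_eq : ∑ t, f t = (fiberCard f 1 : ZMod 3) - fiberCard f 2 := by
    rw [fiberCard, fiberCard, natCast_card_filter, natCast_card_filter, ← sum_sub_distrib]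
    refine sum_congr rfl fun t _ ↦ ?_
    generalize f t = c
    revert c
    decide
  rw [sum_eq, sub_eq_zero, ZMod.natCast_eq_natCast_iff']

theorem fiberCard_eq_sum_curry {J T V : Type*} [Fintype J] [Fintype T] [DecidableEq V]
    (f : J × T → V) (v : V) : fiberCard f v = ∑ j, fiberCard (fun t ↦ f (j, t)) v := by
  simp only [fiberCard, card_filter, Fintype.sum_prod_type]

/-- The congruence condition in `Kl`, for the matrix whose `(i, j)` entry is the number of
positions of the `j`-th block that `lam` labels by `i`. -/
def BlocksBalanced {m k : ℕ} (lam : Fin m × Fin k → Fin 3) : Prop :=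
  ∀ j, fiberCard (fun t ↦ lam (j, t)) 1 % 3 = fiberCard (fun t ↦ lam (j, t)) 2 % 3

instance {m k : ℕ} (lam : Fin m × Fin k → Fin 3) : Decidable (BlocksBalanced lam) :=
  inferInstanceAs (Decidable (∀ _, _))

theorem Kl_eq_card (k m : ℕ) (l : Fin 3 → ℕ) :
    Kl k m l = #{lam : Fin m × Fin k → Fin 3 | fiberCard lam = l ∧ BlocksBalanced lam} := by
  have fiberCard_lt (f : Fin k → Fin 3) (i : Fin 3) : fiberCard f i < k + 1 :=
    Nat.lt_succ_of_le ((card_le_univ _).trans (by simp))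
  let columns (lam : Fin m × Fin k → Fin 3) (i : Fin 3) (j : Fin m) : Fin (k + 1) :=
    ⟨fiberCard (fun t ↦ lam (j, t)) i, fiberCard_lt _ i⟩
  rw [Kl, card_eq_sum_card_fiberwise (f := columns)
    (t := {A : Fin 3 → Fin m → Fin (k + 1) | (∀ j, (A 0 j : ℕ) + A 1 j + A 2 j = k) ∧
      (∀ i, ∑ j, (A i j : ℕ) = l i) ∧ ∀ j, (A 1 j : ℕ) % 3 = (A 2 j : ℕ) % 3})]
  · refine sum_congr rfl fun A hA ↦ ?_
    obtain ⟨hcol, hrow, hmod⟩ := (mem_filter.1 hA).2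
    have column (j) : Nat.multinomial univ (fun i ↦ (A i j : ℕ))
        = #{f : Fin k → Fin 3 | fiberCard f = fun i ↦ (A i j : ℕ)} :=
      (card_filter_fiberCard_eq _ (by simpa [Fin.sum_univ_three] using hcol j)).symm
    simp only [column]
    rw [← Fintype.card_piFinset]
    refine (card_equiv (Equiv.curry _ _ _) fun lam ↦ ?_).symm
    have curry_apply (j) : Function.curry lam j = fun t ↦ lam (j, t) := rfl
    simp only [mem_filter, mem_univ, true_and, Fintype.mem_piFinset, Equiv.curry_apply,
      curry_apply, columns, funext_iff, Fin.ext_iff]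
    refine ⟨fun h j i ↦ h.2 i j, fun h ↦ ⟨⟨fun i ↦ ?_, fun j ↦ ?_⟩, fun i j ↦ h j i⟩⟩
    · rw [fiberCard_eq_sum_curry, ← hrow]
      exact sum_congr rfl fun j _ ↦ h j i
    · rw [h, h, hmod]
  · intro lam hlam
    obtain ⟨rfl, hmod⟩ := (mem_filter.1 hlam).2
    refine mem_filter.2 ⟨mem_univ _, fun j ↦ ?_, fun i ↦ (fiberCard_eq_sum_curry lam i).symm, hmod⟩
    simpa [Fin.sum_univ_three] using sum_fiberCard fun t ↦ lam (j, t)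

theorem Nwl_eq_card {k m n : ℕ} {w l : Fin 3 → ℕ} (hw : ∑ i, w i = n) :
    Nwl k m w l = #{p : (Fin n → Fin 3) × (Fin m × Fin k → Fin n) |
      (TwoLeFibers p.2 ∧ BlocksBalanced (p.1 ∘ p.2)) ∧
      (fiberCard p.1, fiberCard (p.1 ∘ p.2)) = (w, l)} := by
  symm
  rw [card_eq_sum_card_fiberwise (f := fun p ↦ (p.1, p.1 ∘ p.2))
    (t := ({x | fiberCard x = w} : Finset (Fin n → Fin 3)) ×ˢ
      ({lam | fiberCard lam = l ∧ BlocksBalanced lam} : Finset (Fin m × Fin k → Fin 3)))]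
  · rw [sum_congr rfl (g := fun _ ↦ ∏ i, M (l i) (w i))]
    · rw [sum_const, card_product, card_filter_fiberCard_eq w (by simpa using hw), ← Kl_eq_card,
        Nwl, Fin.prod_univ_three, smul_eq_mul]
      ring
    · rintro ⟨x, lam⟩ hxlam
      simp only [mem_product, mem_filter, mem_univ, true_and] at hxlam
      obtain ⟨rfl, rfl, hmod⟩ := hxlam
      rw [← card_twoLeFibers_over x lam]
      refine card_bij (fun p _ ↦ p.2) ?_ ?_ ?_
      · rintro ⟨x', σ⟩ hp
        simp only [mem_filter, mem_univ, true_and, Prod.mk.injEq] at hp ⊢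
        obtain ⟨⟨⟨hσ, -⟩, -⟩, rfl, rfl⟩ := hp
        exact ⟨hσ, fun _ ↦ rfl⟩
      · rintro ⟨x', σ⟩ hp ⟨x'', σ'⟩ hp' rfl
        simp only [mem_filter, mem_univ, true_and, Prod.mk.injEq] at hp hp'
        rw [hp.2.1, hp'.2.1]
      · intro σ hσ
        simp only [mem_filter, mem_univ, true_and] at hσ
        obtain rfl : x ∘ σ = lam := funext hσ.2
        exact ⟨(x, σ), by simpa using ⟨hσ.1, hmod⟩, rfl⟩
  · rintro ⟨x, σ⟩ hp
    simp only [coe_filter, mem_univ, true_and, Set.mem_ofPred_eq, Prod.mk.injEq] at hp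
    simpa using ⟨hp.2.1, hp.2.2, hp.1.2⟩

theorem sum_Nwl_eq_card (k m n : ℕ) :
    ∑ w ∈ Finset.Nat.antidiagonalTuple 3 n, ∑ l ∈ Finset.Nat.antidiagonalTuple 3 (k * m),
        Nwl k m w l
      = #{p : (Fin n → ZMod 3) × (Fin m × Fin k → Fin n) |
          TwoLeFibers p.2 ∧ ∀ j, ∑ t, p.1 (p.2 (j, t)) = 0} := by
  calc _ = #{p : (Fin n → Fin 3) × (Fin m × Fin k → Fin n) |
        TwoLeFibers p.2 ∧ BlocksBalanced (p.1 ∘ p.2)} := by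
        rw [← sum_product', card_eq_sum_card_fiberwise
          (f := fun p ↦ (fiberCard p.1, fiberCard (p.1 ∘ p.2)))
          (t := Finset.Nat.antidiagonalTuple 3 n ×ˢ Finset.Nat.antidiagonalTuple 3 (k * m))]
        · refine sum_congr rfl fun ⟨w, l⟩ hwl ↦ ?_
          rw [Nwl_eq_card (Finset.Nat.mem_antidiagonalTuple.1 (mem_product.1 hwl).1), filter_filter]
        · rintro ⟨x, σ⟩ -
          simp [Finset.Nat.mem_antidiagonalTuple, sum_fiberCard, mul_comm]
    _ = _ := by
        let e : Fin 3 ≃ ZMod 3 := Equiv.refl (Fin 3)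
        refine card_equiv (((Equiv.refl _).arrowCongr e).prodCongr (Equiv.refl _)) ?_
        rintro ⟨x, σ⟩
        simp only [mem_filter_univ, sum_zmod_three_eq_zero_iff]
        rfl

/-! ### Duality -/

theorem card_mulVec_eq_zero_mul_card_pow_rank {F J V : Type*} [Field F] [Fintype F]
    [DecidableEq F] [Fintype J] [Fintype V] [DecidableEq V] (A : Matrix J V F) :
    #{x : V → F | A.mulVec x = 0} * Fintype.card F ^ A.rank
      = Fintype.card F ^ Fintype.card V := by
  have card_ker : #{x : V → F | A.mulVec x = 0}
      = Fintype.card F ^ Module.finrank F (LinearMap.ker A.mulVecLin) := by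
    classical
    rw [← Module.card_eq_pow_finrank, Fintype.card_subtype]
    simp
  rw [card_ker, ← pow_add, Matrix.rank, add_comm, LinearMap.finrank_range_add_finrank_ker,
    Module.finrank_fintype_fun_eq_card]

section Duality

variable {F J T V : Type*} [Field F] [Fintype F] [DecidableEq F] [Fintype J] [DecidableEq J]
  [Fintype T] [Fintype V] [DecidableEq V]

/-- The two counts are the sizes of the kernels of the incidence matrix of `σ` and of its
transpose, which have equal rank. -/
theorem card_block_sums_eq_zero_mul (σ : J × T → V) :
    #{x : V → F | ∀ j, ∑ t, x (σ (j, t)) = 0} * Fintype.card F ^ Fintype.card J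
      = Fintype.card F ^ Fintype.card V * #{y : J → F | ∀ v, ∑ a with σ a = v, y a.1 = 0} := by
  let A : Matrix J V F := Matrix.of fun j v ↦ ∑ t, if σ (j, t) = v then 1 else 0
  have mulVec_eq (x : V → F) : A.mulVec x = fun j ↦ ∑ t, x (σ (j, t)) := by
    ext j
    simp only [Matrix.mulVec, dotProduct, A, Matrix.of_apply, sum_mul]
    rw [sum_comm]
    simp
  have transpose_mulVec_eq (y : J → F) :
      A.transpose.mulVec y = fun v ↦ ∑ a with σ a = v, y a.1 := by
    ext v
    simp only [Matrix.mulVec, dotProduct, A, Matrix.transpose_apply, Matrix.of_apply, sum_mul,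
      ite_mul, one_mul, zero_mul, sum_filter, Fintype.sum_prod_type]
  have hker := card_mulVec_eq_zero_mul_card_pow_rank A
  have hker' := card_mulVec_eq_zero_mul_card_pow_rank A.transpose
  simp only [Matrix.rank_transpose, mulVec_eq, transpose_mulVec_eq, funext_iff,
    Pi.zero_apply] at hker hker'
  rw [← hker, ← hker']
  ring

theorem card_block_sums_eq_zero_pairs_mul [DecidableEq T] (p : (J × T → V) → Prop)
    [DecidablePred p] :
    #{q : (V → F) × (J × T → V) | p q.2 ∧ ∀ j, ∑ t, q.1 (q.2 (j, t)) = 0}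
        * Fintype.card F ^ Fintype.card J
      = Fintype.card F ^ Fintype.card V *
        ∑ y : J → F, #{σ : J × T → V | p σ ∧ ∀ v, ∑ a with σ a = v, y a.1 = 0} := by
  simp only [card_filter, Fintype.sum_prod_type_right]
  rw [sum_comm (γ := J → F), sum_mul, mul_sum]
  refine sum_congr rfl fun σ _ ↦ ?_
  by_cases hσ : p σ
  · simpa only [hσ, true_and, card_filter] using card_block_sums_eq_zero_mul σ
  · simp [hσ]

end Duality

section BalancedCount

variable {S V : Type*} [Fintype S] [DecidableEq S] [Fintype V] [DecidableEq V]

variable (V) in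
/-- The number of placements `σ : S → V` with at least two balls in every box for which the labels
`y : S → ZMod 3` of the balls in each box sum to zero. -/
def balancedCount (y : S → ZMod 3) : ℕ :=
  #{σ : S → V | TwoLeFibers σ ∧ ∀ v, ∑ a with σ a = v, y a = 0}

theorem balancedCount_zero :
    balancedCount V (0 : S → ZMod 3) = M (Fintype.card S) (Fintype.card V) := by
  simp [balancedCount, M_card_eq_card_twoLeFibers]

end BalancedCount

/-- `balancedCount` for a word `y` all of whose letters are repeated `k` times. -/
def blockCount (k n : ℕ) {m : ℕ} (y : Fin m → ZMod 3) : ℕ :=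
  balancedCount (Fin n) fun a : Fin m × Fin k ↦ y a.1

theorem blockCount_zero (k m n : ℕ) : blockCount k n (0 : Fin m → ZMod 3) = M (k * m) n := by
  have := balancedCount_zero (S := Fin m × Fin k) (V := Fin n)
  rwa [Fintype.card_prod, Fintype.card_fin, Fintype.card_fin, Fintype.card_fin, mul_comm] at this

theorem sum_Nwl_mul_three_pow (k m n : ℕ) :
    (∑ w ∈ Finset.Nat.antidiagonalTuple 3 n, ∑ l ∈ Finset.Nat.antidiagonalTuple 3 (k * m),
        Nwl k m w l) * 3 ^ m
      = 3 ^ n * ∑ y : Fin m → ZMod 3, blockCount k n y := by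
  have : Fact (Nat.Prime 3) := ⟨Nat.prime_three⟩
  rw [sum_Nwl_eq_card]
  unfold blockCount balancedCount
  convert card_block_sums_eq_zero_pairs_mul (F := ZMod 3) (J := Fin m) (T := Fin k) (V := Fin n)
      TwoLeFibers using 3
  · congr!
  all_goals simp

/-! ### Exponential generating function bounds -/

section TypeCount

variable {S V ι : Type*} [Fintype S] [DecidableEq V] [DecidableEq ι]

/-- The number of balls of type `i` (with respect to `lam : S → ι`) in the box `v`. -/
def typeCount (lam : S → ι) (σ : S → V) (v : V) (i : ι) : ℕ := #{a | σ a = v ∧ lam a = i}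

theorem typeCount_le_card (lam : S → ι) (σ : S → V) (v : V) (i : ι) :
    typeCount lam σ v i ≤ Fintype.card S := card_le_univ _

theorem typeCount_eq_fiberCard_restrict (lam : S → ι) (σ : S → V) (v : V) (i : ι) :
    typeCount lam σ v i = fiberCard (fun a : {a // lam a = i} ↦ σ a) v :=
  .symm <| card_bij (fun a _ ↦ a.1) (fun a ha ↦ by simpa [a.2] using ha)
    (fun _ _ _ _ ↦ Subtype.ext) fun b hb ↦ by
      obtain ⟨hb, hb'⟩ := (mem_filter.1 hb).2
      exact ⟨⟨b, hb'⟩, by simpa using hb, rfl⟩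

theorem fiberCard_eq_sum_typeCount [Fintype ι] (lam : S → ι) (σ : S → V) (v : V) :
    fiberCard σ v = ∑ i, typeCount lam σ v i := by
  simp only [fiberCard, typeCount, ← filter_filter]
  exact card_eq_sum_card_fiberwise (by simp)

variable [DecidableEq S] [Fintype V] [Fintype ι]

theorem card_filter_typeCount_eq (lam : S → ι) (D : V → ι → ℕ) :
    #{σ : S → V | typeCount lam σ = D}
      = ∏ i, #{τ : {a // lam a = i} → V | fiberCard τ = fun v ↦ D v i} := by
  rw [← Fintype.card_piFinset]
  refine card_equiv (((Equiv.sigmaFiberEquiv lam).symm.arrowCongr (Equiv.refl V)).trans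
    (Equiv.piCurry fun _ _ ↦ V)) fun σ ↦ ?_
  simp only [mem_filter_univ, Fintype.mem_piFinset, funext_iff,
    typeCount_eq_fiberCard_restrict]
  exact forall_comm

/-- Equality holds unless the column sums of `D` differ from the fiber sizes of `lam`, in which
case the left side vanishes. -/
theorem card_filter_typeCount_eq_mul_prod_pow_le (lam : S → ι) (D : V → ι → ℕ) {ξ : ι → ℝ}
    (hξ : ∀ i, 0 ≤ ξ i) :
    (#{σ : S → V | typeCount lam σ = D} : ℝ) * ∏ i, ξ i ^ fiberCard lam i
      ≤ (∏ i, ((fiberCard lam i).factorial : ℝ)) * ∏ v, ∏ i, ξ i ^ D v i / (D v i).factorial := by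
  rw [card_filter_typeCount_eq, prod_comm, Nat.cast_prod, ← prod_mul_distrib, ← prod_mul_distrib]
  refine prod_le_prod (fun i _ ↦ mul_nonneg (by positivity) (pow_nonneg (hξ i) _)) fun i _ ↦ ?_
  have card_fiber : Fintype.card {a // lam a = i} = fiberCard lam i := Fintype.card_subtype _
  by_cases hsum : ∑ v, D v i = fiberCard lam i
  · have spec := Nat.multinomial_spec univ fun v ↦ D v i
    rw [hsum] at spec
    rw [card_filter_fiberCard_eq _ (hsum.trans card_fiber.symm), ← spec, prod_div_distrib,
      prod_pow_eq_pow_sum, hsum, Nat.cast_mul, Nat.cast_prod]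
    have : ∏ v, ((D v i).factorial : ℝ) ≠ 0 :=
      prod_ne_zero_iff.2 fun v _ ↦ by positivity
    field_simp
    exact le_rfl
  · have empty : #{τ : {a // lam a = i} → V | fiberCard τ = fun v ↦ D v i} = 0 := by
      rw [card_eq_zero, filter_eq_empty_iff]
      rintro τ - hτ
      rw [← card_fiber, ← sum_fiberCard τ, hτ] at hsum
      exact hsum rfl
    rw [empty, Nat.cast_zero, zero_mul]
    exact mul_nonneg (by positivity)
      (prod_nonneg fun v _ ↦ div_nonneg (pow_nonneg (hξ i) _) (by positivity))

theorem card_forall_typeCount_eq_sum (lam : S → ι) (P : (ι → ℕ) → Prop) [DecidablePred P] :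
    #{σ : S → V | ∀ v, P (typeCount lam σ v)}
      = ∑ D ∈ Fintype.piFinset fun _ : V ↦ Fintype.piFinset fun _ ↦ range (Fintype.card S + 1),
          if ∀ v, P (D v) then #{σ : S → V | typeCount lam σ = D} else 0 := by
  rw [card_eq_sum_card_fiberwise (f := typeCount lam)
    (t := Fintype.piFinset fun _ ↦ Fintype.piFinset fun _ ↦ range (Fintype.card S + 1))]
  · refine sum_congr rfl fun D _ ↦ ?_
    rw [filter_filter]
    split_ifs with hD
    · congr! 2 with σ
      exact ⟨And.right, fun h ↦ ⟨h ▸ hD, h⟩⟩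
    · exact card_eq_zero.2 (filter_eq_empty_iff.2 fun σ _ h ↦ hD (h.2 ▸ h.1))
  · intro σ _
    simp [typeCount_le_card]

theorem card_forall_typeCount_mul_prod_pow_le (lam : S → ι) (P : (ι → ℕ) → Prop)
    [DecidablePred P] {ξ : ι → ℝ} (hξ : ∀ i, 0 ≤ ξ i) {Φ : ℝ}
    (hΦ : HasSum (fun d : ι → ℕ ↦ if P d then ∏ i, ξ i ^ d i / (d i).factorial else 0) Φ) :
    (#{σ : S → V | ∀ v, P (typeCount lam σ v)} : ℝ) * ∏ i, ξ i ^ fiberCard lam i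
      ≤ (∏ i, ((fiberCard lam i).factorial : ℝ)) * Φ ^ Fintype.card V := by
  set weight : (ι → ℕ) → ℝ := fun d ↦ if P d then ∏ i, ξ i ^ d i / (d i).factorial else 0
  have weight_nonneg (d) : 0 ≤ weight d := by
    unfold weight
    split_ifs
    exacts [prod_nonneg fun i _ ↦ div_nonneg (pow_nonneg (hξ i) _) (by positivity), le_rfl]
  let types : Finset (ι → ℕ) := Fintype.piFinset fun _ ↦ range (Fintype.card S + 1)
  rw [card_forall_typeCount_eq_sum, Nat.cast_sum, sum_mul]
  calc _ ≤ ∑ D ∈ Fintype.piFinset fun _ : V ↦ types,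
        (∏ i, ((fiberCard lam i).factorial : ℝ)) * ∏ v, weight (D v) := by
        refine sum_le_sum fun D _ ↦ ?_
        split_ifs with hD
        · simpa only [weight, hD, if_true] using
            card_filter_typeCount_eq_mul_prod_pow_le lam D hξ
        · rw [Nat.cast_zero, zero_mul]
          exact mul_nonneg (by positivity) (prod_nonneg fun v _ ↦ weight_nonneg (D v))
    _ = (∏ i, ((fiberCard lam i).factorial : ℝ)) * (∑ d ∈ types, weight d) ^ Fintype.card V := by
        rw [← mul_sum, ← card_univ, ← prod_const, prod_univ_sum]
    _ ≤ _ := by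
        gcongr
        exacts [sum_nonneg fun d _ ↦ weight_nonneg d,
          sum_le_hasSum _ (fun d _ ↦ weight_nonneg d) hΦ]

end TypeCount

/-! ### Totally positive kernels of order two -/

section TotalPositivity

variable {ι κ μ : Type*}

/-- The kernel `A` is totally positive of order two: all its `2 × 2` minors are nonnegative. -/
def IsTP2 [LE ι] [LE κ] (A : ι → κ → ℝ) : Prop :=
  ∀ ⦃i i'⦄, i ≤ i' → ∀ ⦃x x'⦄, x ≤ x' → A i x' * A i' x ≤ A i x * A i' x'

/-- The Cauchy–Binet formula expresses a minor of the composition through minors of `A` and `B`. -/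
theorem IsTP2.sum_mul [LE ι] [LinearOrder κ] [LE μ] {A : ι → κ → ℝ} {B : κ → μ → ℝ}
    (hA : IsTP2 A) (hB : IsTP2 B) (T : Finset κ) : IsTP2 fun i x ↦ ∑ y ∈ T, A i y * B y x := by
  intro i i' hi x x' hx
  rw [← sub_nonneg]
  let term (y z : κ) : ℝ := A i y * A i' z * (B y x * B z x' - B y x' * B z x)
  have minor_eq : (∑ y ∈ T, A i y * B y x) * (∑ y ∈ T, A i' y * B y x')
      - (∑ y ∈ T, A i y * B y x') * (∑ y ∈ T, A i' y * B y x)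
      = ∑ y ∈ T, ∑ z ∈ T, term y z := by
    simp only [sum_mul_sum, ← sum_sub_distrib, term]
    exact sum_congr rfl fun y _ ↦ sum_congr rfl fun z _ ↦ by ring
  have symmetrized : 2 * ∑ y ∈ T, ∑ z ∈ T, term y z = ∑ y ∈ T, ∑ z ∈ T,
      (A i y * A i' z - A i z * A i' y) * (B y x * B z x' - B y x' * B z x) := by
    rw [two_mul]
    nth_rewrite 2 [sum_comm]
    simp only [← sum_add_distrib, term]
    exact sum_congr rfl fun y _ ↦ sum_congr rfl fun z _ ↦ by ring
  have : 0 ≤ 2 * ∑ y ∈ T, ∑ z ∈ T, term y z := by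
    rw [symmetrized]
    refine sum_nonneg fun y _ ↦ sum_nonneg fun z _ ↦ ?_
    rcases le_total y z with h | h
    · exact mul_nonneg (sub_nonneg.2 <| (hA hi h)) (sub_nonneg.2 <| hB h hx)
    · exact mul_nonneg_of_nonpos_of_nonpos (sub_nonpos.2 <| hA hi h)
        (by linarith [hB h hx])
  linarith

end TotalPositivity

section LogConcaveSeries

open PowerSeries

/-- The coefficient sequence of `φ` is a Pólya frequency sequence of order two, i.e. its Toeplitz
kernel `(i, x) ↦ φ_{i - x}` (zero for `i < x`) is totally positive of order two. -/
def HasPF2Coeffs (φ : ℝ⟦X⟧) : Prop := IsTP2 fun i x ↦ coeff i (X ^ x * φ)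

theorem hasPF2Coeffs_one : HasPF2Coeffs 1 := by
  intro i i' hi x x' hx
  simp only [mul_one, coeff_X_pow]
  split_ifs <;> first | omega | norm_num

theorem coeff_X_pow_mul_mul (φ ψ : ℝ⟦X⟧) {i L : ℕ} (hi : i < L) (x : ℕ) :
    coeff i (X ^ x * (φ * ψ)) = ∑ y ∈ range L, coeff i (X ^ y * φ) * coeff y (X ^ x * ψ) := by
  rw [mul_left_comm, mul_comm φ, coeff_mul, Finset.Nat.sum_antidiagonal_eq_sum_range_succ_mk]
  refine (sum_congr rfl fun y hy ↦ ?_).trans (sum_subset (range_subset_range.2 hi) fun y _ hy ↦ ?_)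
  · rw [coeff_X_pow_mul' φ y i, if_pos (by simpa [Nat.lt_succ_iff] using hy), mul_comm]
  · rw [coeff_X_pow_mul' φ y i, if_neg (by simpa [Nat.lt_succ_iff] using hy), zero_mul]

theorem HasPF2Coeffs.mul {φ ψ : ℝ⟦X⟧} (hφ : HasPF2Coeffs φ) (hψ : HasPF2Coeffs ψ) :
    HasPF2Coeffs (φ * ψ) := by
  intro i i' hi x x' hx
  have hi' : i' < i' + 1 := i'.lt_succ_self
  simp only [coeff_X_pow_mul_mul φ ψ (hi.trans_lt hi'), coeff_X_pow_mul_mul φ ψ hi']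
  exact hφ.sum_mul hψ (range (i' + 1)) hi hx

theorem HasPF2Coeffs.pow {φ : ℝ⟦X⟧} (hφ : HasPF2Coeffs φ) (n : ℕ) : HasPF2Coeffs (φ ^ n) := by
  induction n with
  | zero => simpa using hasPF2Coeffs_one
  | succ n ih => simpa only [pow_succ] using ih.mul hφ

theorem HasPF2Coeffs.coeff_mul_coeff_succ_le {φ : ℝ⟦X⟧} (hφ : HasPF2Coeffs φ) {j N : ℕ}
    (hj : j ≤ N) : coeff j φ * coeff (N + 1) φ ≤ coeff (j + 1) φ * coeff N φ := by
  have minor := hφ N.le_succ (Nat.zero_le (N - j))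
  simp only [coeff_X_pow_mul'] at minor
  rw [if_pos (by omega), if_pos (by omega), if_pos (by omega), if_pos (by omega)] at minor
  simpa [show N - (N - j) = j by omega, show N + 1 - (N - j) = j + 1 by omega, mul_comm]
    using minor

theorem le_mul_of_hasSum_of_geometric {b : ℕ → ℝ} {N : ℕ} {q A : ℝ} (hb : 0 ≤ b N) (hq0 : 0 < q)
    (hq1 : q < 1) (below : ∀ j < N, q * b j ≤ b (j + 1)) (above : ∀ j ≥ N, b (j + 1) ≤ q * b j)
    (hA : HasSum b A) : A ≤ b N * (N * (q⁻¹) ^ N + (1 - q)⁻¹) := by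
  have head (j : ℕ) (hj : j ∈ range N) : b j ≤ b N * (q⁻¹) ^ N := by
    have step (d : ℕ) (hd : d ≤ N) : b (N - d) ≤ b N * (q⁻¹) ^ d := by
      induction d with
      | zero => simp
      | succ d ih =>
        have h := below (N - (d + 1)) (by omega)
        rw [show N - (d + 1) + 1 = N - d by omega, mul_comm, ← le_div_iff₀ hq0] at h
        calc b (N - (d + 1)) ≤ b (N - d) * q⁻¹ := by rwa [← div_eq_mul_inv]
          _ ≤ b N * (q⁻¹) ^ d * q⁻¹ := by gcongr; exact ih (by omega)
          _ = _ := by ring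
    have hj := mem_range.1 hj
    calc b j = b (N - (N - j)) := by congr; omega
      _ ≤ b N * (q⁻¹) ^ (N - j) := step _ (by omega)
      _ ≤ b N * (q⁻¹) ^ N := by
        gcongr
        exacts [(one_lt_inv₀ hq0).2 hq1 |>.le, by omega]
  have tail (d : ℕ) : b (d + N) ≤ b N * q ^ d := by
    induction d with
    | zero => simp
    | succ d ih =>
      calc b (d + 1 + N) = b (d + N + 1) := by congr 1; omega
        _ ≤ q * b (d + N) := above _ (by omega)
        _ ≤ q * (b N * q ^ d) := by gcongr
        _ = _ := by ring
  have head_sum : ∑ j ∈ range N, b j ≤ N * (b N * (q⁻¹) ^ N) := by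
    simpa using sum_le_card_nsmul _ _ _ head
  have tail_sum := hasSum_le tail ((hasSum_nat_add_iff' N).2 hA)
    ((hasSum_geometric_of_lt_one hq0.le hq1).mul_left (b N))
  linarith

/-- Evaluating at the point `t` where `φ_{N+1} t^{N+1} = q φ_N t^N` makes the terms of `φ(t)`
decay geometrically away from the index `N` in both directions, up to the factor `q⁻¹` below. -/
theorem HasPF2Coeffs.hasSum_le {φ : ℝ⟦X⟧} (hφ : HasPF2Coeffs φ)
    {N : ℕ} (hN : 0 < coeff N φ) (hN' : 0 < coeff (N + 1) φ) {q t A : ℝ} (hq0 : 0 < q)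
    (hq1 : q < 1) (ht : t * coeff (N + 1) φ = q * coeff N φ)
    (hA : HasSum (fun d ↦ coeff d φ * t ^ d) A) :
    A ≤ coeff N φ * t ^ N * (N * (q⁻¹) ^ N + (1 - q)⁻¹) := by
  have ht0 : 0 < t := pos_of_mul_pos_left (ht ▸ mul_pos hq0 hN) hN'.le
  refine le_mul_of_hasSum_of_geometric (by positivity) hq0 hq1 (fun j hj ↦ ?_) (fun j hj ↦ ?_) hA
  · have h : q * coeff j φ ≤ coeff (j + 1) φ * t := by
      refine le_of_mul_le_mul_right ?_ hN
      calc q * coeff j φ * coeff N φ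
          = coeff j φ * coeff (N + 1) φ * t := by linear_combination -coeff j φ * ht
        _ ≤ coeff (j + 1) φ * coeff N φ * t :=
          mul_le_mul_of_nonneg_right (hφ.coeff_mul_coeff_succ_le hj.le) ht0.le
        _ = _ := by ring
    calc _ = q * coeff j φ * t ^ j := by ring
      _ ≤ coeff (j + 1) φ * t * t ^ j := by gcongr
      _ = _ := by ring
  · have h : coeff (j + 1) φ * t ≤ q * coeff j φ := by
      refine le_of_mul_le_mul_left ?_ hN
      calc coeff N φ * (coeff (j + 1) φ * t) = coeff N φ * coeff (j + 1) φ * t := by ring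
        _ ≤ coeff (N + 1) φ * coeff j φ * t :=
          mul_le_mul_of_nonneg_right (hφ.coeff_mul_coeff_succ_le hj) ht0.le
        _ = _ := by linear_combination coeff j φ * ht
    calc _ = coeff (j + 1) φ * t * t ^ j := by ring
      _ ≤ q * coeff j φ * t ^ j := by gcongr
      _ = _ := by ring

theorem hasSum_coeff_mul {φ ψ : ℝ⟦X⟧} {z A B : ℝ} (hφ : ∀ d, 0 ≤ coeff d φ)
    (hψ : ∀ d, 0 ≤ coeff d ψ) (hz : 0 ≤ z) (hA : HasSum (fun d ↦ coeff d φ * z ^ d) A)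
    (hB : HasSum (fun d ↦ coeff d ψ * z ^ d) B) :
    HasSum (fun d ↦ coeff d (φ * ψ) * z ^ d) (A * B) := by
  have hA' : Summable fun d ↦ ‖coeff d φ * z ^ d‖ := hA.summable.congr fun d ↦
    (Real.norm_of_nonneg (mul_nonneg (hφ d) (by positivity))).symm
  have hB' : Summable fun d ↦ ‖coeff d ψ * z ^ d‖ := hB.summable.congr fun d ↦
    (Real.norm_of_nonneg (mul_nonneg (hψ d) (by positivity))).symm
  have product := (summable_norm_sum_mul_antidiagonal_of_summable_norm hA' hB').of_norm.hasSum
  rw [← tsum_mul_tsum_eq_tsum_sum_antidiagonal_of_summable_norm hA' hB', hA.tsum_eq,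
    hB.tsum_eq] at product
  refine product.congr_fun fun d ↦ ?_
  rw [coeff_mul, sum_mul]
  refine sum_congr rfl fun p hp ↦ ?_
  rw [← mem_antidiagonal.1 hp]
  ring

theorem coeff_pow_nonneg {φ : ℝ⟦X⟧} (hφ : ∀ d, 0 ≤ coeff d φ) (n d : ℕ) :
    0 ≤ coeff d (φ ^ n) := by
  rw [coeff_pow]
  exact sum_nonneg fun l _ ↦ prod_nonneg fun i _ ↦ hφ _

theorem hasSum_coeff_pow {φ : ℝ⟦X⟧} {z A : ℝ} (hφ : ∀ d, 0 ≤ coeff d φ) (hz : 0 ≤ z)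
    (hA : HasSum (fun d ↦ coeff d φ * z ^ d) A) (n : ℕ) :
    HasSum (fun d ↦ coeff d (φ ^ n) * z ^ d) (A ^ n) := by
  induction n with
  | zero =>
    convert hasSum_ite_eq 0 (1 : ℝ) using 2 with d
    · by_cases hd : d = 0 <;> simp [coeff_one, hd]
    · simp
  | succ n ih =>
    rw [pow_succ, pow_succ]
    exact hasSum_coeff_mul (coeff_pow_nonneg hφ n) hφ hz ih hA

end LogConcaveSeries

/-! ### The generating function `exp z - 1 - z` -/

section ExpTail

open PowerSeries

/-- `exp z - 1 - z`, the exponential generating function of sets with at least two elements and the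
denominator of `Qf`. -/
noncomputable def expTail (z : ℝ) : ℝ := Real.exp z - 1 - z

/-- The Taylor series of `expTail`. -/
noncomputable def expTailSeries : ℝ⟦X⟧ :=
  PowerSeries.mk fun d ↦ if 2 ≤ d then (d.factorial : ℝ)⁻¹ else 0

theorem coeff_expTailSeries (d : ℕ) :
    coeff d expTailSeries = if 2 ≤ d then (d.factorial : ℝ)⁻¹ else 0 :=
  coeff_mk _ _

theorem coeff_expTailSeries_nonneg (d : ℕ) : 0 ≤ coeff d expTailSeries := by
  rw [coeff_expTailSeries]
  split_ifs <;> positivity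

theorem hasSum_pow_div_factorial (z : ℝ) :
    HasSum (fun d : ℕ ↦ z ^ d / d.factorial) (Real.exp z) := by
  simpa only [← Real.exp_eq_exp_ℝ] using NormedSpace.expSeries_div_hasSum_exp z

theorem hasSum_coeff_expTailSeries (z : ℝ) :
    HasSum (fun d ↦ coeff d expTailSeries * z ^ d) (expTail z) := by
  rw [← hasSum_nat_add_iff' 2]
  convert (hasSum_nat_add_iff' 2).2 (hasSum_pow_div_factorial z) using 1
  · funext d
    simp [coeff_expTailSeries, div_eq_inv_mul]
  · simp [coeff_expTailSeries, expTail, sum_range_succ]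
    ring

theorem hasSum_natCast_mul_coeff_expTailSeries (z : ℝ) :
    HasSum (fun d : ℕ ↦ (d : ℝ) * (coeff d expTailSeries * z ^ d)) (z * (Real.exp z - 1)) := by
  rw [← hasSum_nat_add_iff' 2]
  convert! ((hasSum_nat_add_iff' 1).2 (hasSum_pow_div_factorial z)).mul_left z using 1
  · funext d
    simp only [coeff_expTailSeries, le_add_iff_nonneg_left, zero_le, if_true,
      Nat.factorial_succ (d + 1), Nat.cast_mul]
    field_simp
    ring
  · simp [coeff_expTailSeries, sum_range_succ]

theorem expTail_nonneg (z : ℝ) : 0 ≤ expTail z := by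
  rw [expTail]
  linarith [Real.add_one_le_exp z]

theorem expTail_pos {z : ℝ} (hz : z ≠ 0) : 0 < expTail z := by
  rw [expTail]
  linarith [Real.add_one_lt_exp hz]

theorem Qf_mul_expTail {z : ℝ} (hz : z ≠ 0) : Qf z * expTail z = z * (Real.exp z - 1) := by
  have pos := expTail_pos hz
  rw [Qf, sub_right_comm, ← expTail]
  field_simp

theorem factorial_add_mul_factorial_add_le (p d e : ℕ) :
    (p + d).factorial * (p + e).factorial ≤ p.factorial * (p + d + e).factorial := by
  calc (p + d).factorial * (p + e).factorial
      = p.factorial * (p + d).factorial * (p + 1).ascFactorial e := by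
        rw [← Nat.factorial_mul_ascFactorial p e]; ring
    _ ≤ p.factorial * (p + d).factorial * (p + d + 1).ascFactorial e :=
        Nat.mul_le_mul_left _ (Nat.ascFactorial_le e (by omega))
    _ = p.factorial * (p + d + e).factorial := by
        rw [← Nat.factorial_mul_ascFactorial (p + d) e]; ring

theorem hasPF2Coeffs_expTailSeries : HasPF2Coeffs expTailSeries := by
  have entry (i x : ℕ) : coeff i (X ^ x * expTailSeries)
      = if x + 2 ≤ i then ((i - x).factorial : ℝ)⁻¹ else 0 := by
    rw [coeff_X_pow_mul', coeff_expTailSeries]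
    split_ifs <;> first | rfl | omega
  intro i i' hi x x' hx
  simp only [entry]
  by_cases h : x' + 2 ≤ i
  · rw [if_pos h, if_pos (by omega), if_pos (by omega), if_pos (by omega), ← mul_inv, ← mul_inv]
    have ineq := factorial_add_mul_factorial_add_le (i - x') (x' - x) (i' - i)
    rw [show i - x' + (x' - x) = i - x by omega, show i - x' + (i' - i) = i' - x' by omega,
      show i - x + (i' - i) = i' - x by omega] at ineq
    exact inv_anti₀ (by positivity) (by exact_mod_cast ineq)
  · rw [if_neg h, zero_mul]
    split_ifs <;> positivity

theorem coeff_expTailSeries_pow_pos {n N : ℕ} (hn : 1 ≤ n) (hN : 2 * n ≤ N) :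
    0 < coeff N (expTailSeries ^ n) := by
  induction n, hn using Nat.le_induction generalizing N with
  | base =>
    rw [pow_one, coeff_expTailSeries, if_pos (by omega)]
    positivity
  | succ n hn ih =>
    rw [pow_succ, coeff_mul]
    refine sum_pos' (fun p _ ↦ mul_nonneg (coeff_pow_nonneg coeff_expTailSeries_nonneg _ _)
      (coeff_expTailSeries_nonneg _)) ⟨(N - 2, 2), by simp; omega, ?_⟩
    refine mul_pos (ih (by omega)) ?_
    rw [coeff_expTailSeries, if_pos le_rfl]
    positivity

theorem M_eq_factorial_mul_coeff (N n : ℕ) :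
    (M N n : ℝ) = N.factorial * coeff N (expTailSeries ^ n) := by
  have coeff_eq : coeff N (expTailSeries ^ n)
      = ∑ v ∈ Finset.Nat.antidiagonalTuple n N, ∏ i, coeff (v i) expTailSeries := by
    rw [← Fin.prod_const, coeff_prod, finsuppAntidiag, sum_map,
      ← piAntidiag_univ_fin_eq_antidiagonalTuple, ← sum_attach (piAntidiag _ _)]
    rfl
  rw [coeff_eq, M, sum_filter, mul_sum, Nat.cast_sum]
  refine sum_congr rfl fun v hv ↦ ?_
  split_ifs with h
  · simp only [coeff_expTailSeries, h, if_true, prod_inv_distrib]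
    rw [← (Finset.Nat.mem_antidiagonalTuple).1 hv, ← Nat.multinomial_spec univ v]
    have : (∏ i, (v i).factorial : ℝ) ≠ 0 := prod_ne_zero_iff.2 fun i _ ↦ by positivity
    push_cast
    field_simp
  · obtain ⟨i, hi⟩ := not_forall.1 h
    rw [prod_eq_zero (mem_univ i) (by rw [coeff_expTailSeries, if_neg hi]), mul_zero, Nat.cast_zero]

/-- Jensen's inequality, in the form of the tangent line bound for `u ↦ exp (d * u)` at the mean
`Qf s` of the distribution with weights `coeff d expTailSeries * s ^ d`. -/
theorem expTail_mul_exp_le {s t : ℝ} (hs : 0 < s) (ht : 0 < t) :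
    expTail s * Real.exp (Qf s * Real.log (t / s)) ≤ expTail t := by
  set u := Real.log (t / s)
  have htu : t = s * Real.exp u := by rw [Real.exp_log (by positivity)]; field_simp
  have tangent (d : ℕ) : Real.exp (Qf s * u) * ((1 - Qf s * u) * (coeff d expTailSeries * s ^ d)
      + u * (d * (coeff d expTailSeries * s ^ d))) ≤ coeff d expTailSeries * t ^ d := by
    have weight_nonneg : 0 ≤ coeff d expTailSeries * s ^ d :=
      mul_nonneg (coeff_expTailSeries_nonneg d) (by positivity)
    calc _ = coeff d expTailSeries * s ^ d * (Real.exp (Qf s * u) * (d * u - Qf s * u + 1)) := by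
          ring
      _ ≤ coeff d expTailSeries * s ^ d * (Real.exp (Qf s * u) * Real.exp (d * u - Qf s * u)) := by
          gcongr
          exact Real.add_one_le_exp _
      _ = coeff d expTailSeries * t ^ d := by
          rw [← Real.exp_add, htu, mul_pow, ← Real.exp_nat_mul]
          ring_nf
  have summed := hasSum_le tangent ((((hasSum_coeff_expTailSeries s).mul_left _).add
    ((hasSum_natCast_mul_coeff_expTailSeries s).mul_left u)).mul_left _)
    (hasSum_coeff_expTailSeries t)
  rw [← Qf_mul_expTail hs.ne'] at summed
  linarith

theorem expTail_pow_div_pow_le {s t : ℝ} (hs : 0 < s) (ht : 0 < t) {n N : ℕ}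
    (hQ : n * Qf s = N) : expTail s ^ n / s ^ N ≤ expTail t ^ n / t ^ N := by
  have hf := (expTail_pos hs.ne').le
  have h := pow_le_pow_left₀ (by positivity) (expTail_mul_exp_le hs ht) n
  rw [mul_pow, ← Real.exp_nat_mul, ← mul_assoc, hQ, Real.exp_nat_mul,
    Real.exp_log (by positivity), div_pow] at h
  rw [le_div_iff₀ (by positivity)]
  exact le_of_eq_of_le (by ring) h

theorem inv_one_sub_inv_pow_le {n k N : ℕ} (hn : 2 ≤ n) (hN : N ≤ k * n) :
    ((1 - (n : ℝ)⁻¹)⁻¹) ^ N ≤ Real.exp (2 * k) := by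
  have hn' : (2 : ℝ) ≤ n := by exact_mod_cast hn
  have inv_le : (n : ℝ)⁻¹ ≤ 2⁻¹ := inv_anti₀ two_pos hn'
  have base_le : (1 - (n : ℝ)⁻¹)⁻¹ ≤ Real.exp (2 / n) := by
    refine le_trans ?_ (Real.add_one_le_exp _)
    rw [inv_le_iff_one_le_mul₀ (by linarith), div_eq_mul_inv]
    nlinarith [inv_pos.2 (two_pos.trans_le hn')]
  calc ((1 - (n : ℝ)⁻¹)⁻¹) ^ N ≤ Real.exp (2 / n) ^ N := by
        gcongr
        exact inv_nonneg.2 (by linarith)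
    _ = Real.exp (N * (2 / n)) := by rw [← Real.exp_nat_mul]
    _ ≤ Real.exp (2 * k) := by
      have hN' : (N : ℝ) ≤ k * n := by exact_mod_cast hN
      rw [Real.exp_le_exp, ← mul_div_assoc, div_le_iff₀ (by linarith)]
      linarith

/-- The saddle-point estimate of `M N n`: the Cauchy bound for `N!` times the `N`-th coefficient of
`expTail ^ n` on the circle of radius `s`, which is optimal when `n * Qf s = N`. -/
noncomputable def saddleEstimate (s : ℝ) (N n : ℕ) : ℝ :=
  expTail s ^ n / s ^ N * N.factorial

theorem saddleEstimate_nonneg {s : ℝ} (hs : 0 ≤ s) (N n : ℕ) : 0 ≤ saddleEstimate s N n := by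
  have := expTail_nonneg s
  unfold saddleEstimate
  positivity

theorem saddleEstimate_le_M {n k N : ℕ} {s : ℝ} (hs : 0 < s) (hn : 2 ≤ n) (h2n : 2 * n ≤ N)
    (hkn : N ≤ k * n) (hQ : n * Qf s = N) :
    saddleEstimate s N n ≤ M N n * (n * (1 + k * Real.exp (2 * k))) := by
  have hn' : (2 : ℝ) ≤ n := by exact_mod_cast hn
  have inv_le : (n : ℝ)⁻¹ ≤ 2⁻¹ := inv_anti₀ two_pos hn'
  have inv_pos : 0 < (n : ℝ)⁻¹ := by positivity
  have cN := coeff_expTailSeries_pow_pos (by omega) h2n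
  have cN1 := coeff_expTailSeries_pow_pos (N := N + 1) (n := n) (by omega) (by omega)
  set q : ℝ := 1 - (n : ℝ)⁻¹ with hq
  have hq0 : 0 < q := by linarith
  set t := q * coeff N (expTailSeries ^ n) / coeff (N + 1) (expTailSeries ^ n) with ht
  have ht0 : 0 < t := by positivity
  have sum_le := (hasPF2Coeffs_expTailSeries.pow n).hasSum_le cN cN1 hq0 (by linarith)
    (by rw [ht]; field_simp) (hasSum_coeff_pow coeff_expTailSeries_nonneg ht0.le
      (hasSum_coeff_expTailSeries t) n)
  have factor_le : N * (q⁻¹) ^ N + (1 - q)⁻¹ ≤ n * (1 + k * Real.exp (2 * k)) := by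
    calc N * (q⁻¹) ^ N + (1 - q)⁻¹ = N * (q⁻¹) ^ N + n := by rw [hq, sub_sub_cancel, inv_inv]
      _ ≤ (k * n : ℕ) * Real.exp (2 * k) + n := by
        gcongr
        exact inv_one_sub_inv_pow_le hn hkn
      _ = n * (1 + k * Real.exp (2 * k)) := by push_cast; ring
  calc saddleEstimate s N n
      ≤ expTail t ^ n / t ^ N * N.factorial := by
        rw [saddleEstimate]
        gcongr ?_ * _
        exact expTail_pow_div_pow_le hs ht0 hQ
    _ ≤ coeff N (expTailSeries ^ n) * (n * (1 + k * Real.exp (2 * k))) * N.factorial := by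
        gcongr
        rw [div_le_iff₀ (by positivity)]
        calc _ ≤ _ := sum_le
          _ ≤ coeff N (expTailSeries ^ n) * t ^ N * (n * (1 + k * Real.exp (2 * k))) := by gcongr
          _ = _ := by ring
    _ = M N n * (n * (1 + k * Real.exp (2 * k))) := by rw [M_eq_factorial_mul_coeff]; ring

end ExpTail

/-! ### Generating functions of restricted type vectors -/

section TypeVectors

theorem addChar_map_sum {ι A M : Type*} [AddCommMonoid A] [CommMonoid M] (ψ : AddChar A M)
    (s : Finset ι) (f : ι → A) : ψ (∑ i ∈ s, f i) = ∏ i ∈ s, ψ (f i) :=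
  map_prod (M := Multiplicative A) ψ.toMonoidHom f s

theorem hasSum_fin_prod_and_summable_norm {α R : Type*} [NormedCommRing R] [CompleteSpace R]
    {k : ℕ} {f : Fin k → α → R} {A : Fin k → R} (hf : ∀ i, HasSum (f i) (A i))
    (hf' : ∀ i, Summable fun d ↦ ‖f i d‖) :
    HasSum (fun d : Fin k → α ↦ ∏ i, f i (d i)) (∏ i, A i) ∧
      Summable fun d : Fin k → α ↦ ‖∏ i, f i (d i)‖ := by
  induction k with
  | zero =>
    simp only [univ_eq_empty, prod_empty]
    exact ⟨hasSum_unique _, Summable.of_finite⟩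
  | succ k ih =>
    obtain ⟨sum, norm⟩ := ih (fun i ↦ hf i.succ) fun i ↦ hf' i.succ
    let split := (Fin.consEquiv fun _ : Fin (k + 1) ↦ α).symm
    let g (p : α × (Fin k → α)) : R := f 0 p.1 * ∏ i, f i.succ (p.2 i)
    have norm_mul := (hf' 0).mul_norm norm
    have sum_mul := (hf 0).mul sum norm_mul.of_norm
    simp only [Fin.prod_univ_succ]
    exact ⟨(split.hasSum_iff (f := g)).2 sum_mul, (split.summable_iff (f := (‖g ·‖))).2 norm_mul⟩

variable {ι : Type*} [Fintype ι]

theorem hasSum_pi_prod {α R : Type*} [NormedCommRing R] [CompleteSpace R] {f : ι → α → R}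
    {A : ι → R} (hf : ∀ i, HasSum (f i) (A i)) (hf' : ∀ i, Summable fun d ↦ ‖f i d‖) :
    HasSum (fun d : ι → α ↦ ∏ i, f i (d i)) (∏ i, A i) := by
  let e := Fintype.equivFin ι
  have := (hasSum_fin_prod_and_summable_norm (fun i ↦ hf (e.symm i)) fun i ↦ hf' (e.symm i)).1
  rw [e.symm.prod_comp A] at this
  rw [← (e.arrowCongr (Equiv.refl α)).symm.hasSum_iff]
  refine this.congr_fun fun d ↦ ?_
  simp [← e.symm.prod_comp]

theorem hasSum_prod_pow_div_factorial (z : ι → ℂ) :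
    HasSum (fun d : ι → ℕ ↦ ∏ i, z i ^ d i / ((d i).factorial : ℂ)) (Complex.exp (∑ i, z i)) := by
  have product := hasSum_pi_prod (R := ℂ) (f := fun i d ↦ z i ^ d / (d.factorial : ℂ))
    (A := fun i ↦ Complex.exp (z i)) ?_ ?_
  · rwa [← Complex.exp_sum] at product
  · intro i
    rw [Complex.exp_eq_exp_ℂ]
    exact NormedSpace.expSeries_div_hasSum_exp (z i)
  · exact fun i ↦ (Real.summable_pow_div_factorial ‖z i‖).congr fun d ↦ by simp

theorem exists_eq_single_of_sum_eq_one [DecidableEq ι] {d : ι → ℕ} (hd : ∑ i, d i = 1) :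
    ∃ i, d = Pi.single i 1 := by
  obtain ⟨i, hi⟩ := (Finsupp.sum_eq_one_iff (Finsupp.equivFunOnFinite.symm d)).1
    (by rw [Finsupp.sum_fintype _ _ fun _ ↦ rfl]; exact hd)
  refine ⟨i, ?_⟩
  rw [← Finsupp.single_eq_pi_single, ← hi]
  rfl

theorem hasSum_two_le_sum_and [DecidableEq ι] {ξ : ι → ℝ} {Q : (ι → ℕ) → Prop} [DecidablePred Q]
    {A : ℝ} (hA : HasSum (fun d : ι → ℕ ↦ if Q d then ∏ i, ξ i ^ d i / (d i).factorial else 0) A)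
    (hQ : Q 0) :
    HasSum (fun d : ι → ℕ ↦ if 2 ≤ ∑ i, d i ∧ Q d then ∏ i, ξ i ^ d i / (d i).factorial else 0)
      (A - (1 + ∑ i, if Q (Pi.single i 1) then ξ i else 0)) := by
  let small (d : ι → ℕ) : ℝ :=
    if ∑ i, d i < 2 ∧ Q d then ∏ i, ξ i ^ d i / (d i).factorial else 0
  let supp : Finset (ι → ℕ) := insert 0 (univ.image fun i ↦ Pi.single i 1)
  have small_eq_zero (d : ι → ℕ) (hd : d ∉ supp) : small d = 0 := by
    refine if_neg fun h ↦ hd ?_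
    rcases Nat.le_one_iff_eq_zero_or_eq_one.1 (Nat.lt_succ_iff.1 h.1) with h | h
    · exact mem_insert.2 (Or.inl (funext fun i ↦ sum_eq_zero_iff.1 h i (mem_univ i)))
    · obtain ⟨i, rfl⟩ := exists_eq_single_of_sum_eq_one h
      exact mem_insert_of_mem (mem_image_of_mem _ (mem_univ i))
  have small_single (i : ι) : small (Pi.single i 1) = if Q (Pi.single i 1) then ξ i else 0 := by
    simp only [small, sum_pi_single', mem_univ, if_true, Nat.one_lt_two, true_and]
    rw [Fintype.prod_eq_single i fun j hj ↦ by simp [hj]]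
    simp
  have sum_small : ∑ d ∈ supp, small d = 1 + ∑ i, if Q (Pi.single i 1) then ξ i else 0 := by
    have single_inj : Function.Injective fun i : ι ↦ (Pi.single i 1 : ι → ℕ) := fun i j h ↦ by
      simpa [Pi.single_apply] using congrFun h i
    have small_zero : small 0 = 1 := by simp [small, hQ]
    rw [sum_insert (by simp), sum_image single_inj.injOn, small_zero]
    simp only [small_single]
  have small_sum : HasSum small _ := hasSum_sum_of_ne_finset_zero small_eq_zero
  rw [sum_small] at small_sum
  refine (hA.sub small_sum).congr_fun fun d ↦ ?_
  by_cases h : 2 ≤ ∑ i, d i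
  · simp only [small, h, not_lt.2 h, true_and, false_and, if_false, sub_zero]
  · simp only [small, h, not_le.1 h, true_and, false_and, if_false, sub_self]

/-- Orthogonality of the characters of `ZMod N` detects the type vectors of zero sum. -/
theorem hasSum_zero_sum_types {N : ℕ} [NeZero N] (ξ : ZMod N → ℝ) :
    HasSum (fun d : ZMod N → ℕ ↦
        if ∑ i, (d i : ZMod N) * i = 0 then ∏ i, ξ i ^ d i / (d i).factorial else 0)
      ((N : ℝ)⁻¹ * ∑ t : ZMod N, (Complex.exp (∑ i, ZMod.stdAddChar (t * i) * (ξ i : ℂ))).re) := by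
  have sum := hasSum_sum (s := univ) fun t _ ↦ Complex.hasSum_re
    (hasSum_prod_pow_div_factorial fun i ↦ ZMod.stdAddChar (t * i) * (ξ i : ℂ))
  refine (sum.mul_left (N : ℝ)⁻¹).congr_fun fun d ↦ ?_
  have twist (t : ZMod N) : ∏ i, (ZMod.stdAddChar (t * i) * (ξ i : ℂ)) ^ d i / (d i).factorial
      = ZMod.stdAddChar (t * ∑ i, (d i : ZMod N) * i)
        * ((∏ i, ξ i ^ d i / (d i).factorial : ℝ) : ℂ) := by
    rw [mul_sum, addChar_map_sum]
    push_cast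
    rw [← prod_mul_distrib]
    refine prod_congr rfl fun i _ ↦ ?_
    rw [mul_pow, mul_div_assoc, ← AddChar.map_nsmul_eq_pow, nsmul_eq_mul, mul_left_comm]
  simp only [twist, ← Complex.re_sum, ← sum_mul, Complex.re_mul_ofReal]
  rw [AddChar.sum_mulShift _ (ZMod.isPrimitive_stdAddChar N), ZMod.card]
  split_ifs <;> simp [NeZero.ne N]

theorem sum_univ_zmod_three {R : Type*} [AddCommMonoid R] (f : ZMod 3 → R) :
    ∑ i, f i = f 0 + f 1 + f 2 :=
  Fin.sum_univ_three f

theorem re_stdAddChar_zmod_three {t : ZMod 3} (ht : t ≠ 0) :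
    (ZMod.stdAddChar t : ℂ).re = -1 / 2 := by
  have sum := AddChar.sum_mulShift t (ZMod.isPrimitive_stdAddChar 3)
  rw [if_neg ht, Nat.cast_zero, sum_univ_zmod_three] at sum
  have double : (ZMod.stdAddChar ((2 : ZMod 3) * t) : ℂ).re = (ZMod.stdAddChar t : ℂ).re := by
    rw [show (2 : ZMod 3) = -1 by decide, neg_one_mul, AddChar.map_neg_eq_conj, Complex.conj_re]
  have re_sum := congrArg Complex.re sum
  simp only [Complex.add_re, Complex.zero_re, zero_mul, one_mul, AddChar.map_zero_eq_one,
    Complex.one_re, double] at re_sum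
  linarith

theorem re_exp_stdAddChar_le {t : ZMod 3} (ht : t ≠ 0) (ξ : ZMod 3 → ℝ) :
    (Complex.exp (∑ i, ZMod.stdAddChar (t * i) * (ξ i : ℂ))).re
      ≤ Real.exp (ξ 0 - (ξ 1 + ξ 2) / 2) := by
  refine (Complex.re_le_norm _).trans (le_of_eq ?_)
  have ht2 : t * 2 ≠ 0 := mul_ne_zero ht (by decide)
  rw [Complex.norm_exp, Complex.re_sum]
  simp only [Complex.re_mul_ofReal]
  rw [sum_univ_zmod_three, mul_zero, AddChar.map_zero_eq_one, Complex.one_re, mul_one,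
    re_stdAddChar_zmod_three ht, re_stdAddChar_zmod_three ht2]
  congr 1
  ring

/-- The generating function of the possible fibres, described by their type vectors, of a map
counted by `balancedCount`. -/
theorem exists_hasSum_zmod_three (ξ : ZMod 3 → ℝ) : ∃ Φ, HasSum (fun d : ZMod 3 → ℕ ↦
      if 2 ≤ ∑ i, d i ∧ ∑ i, (d i : ZMod 3) * i = 0 then ∏ i, ξ i ^ d i / (d i).factorial else 0) Φ
    ∧ Φ ≤ (Real.exp (ξ 0 + ξ 1 + ξ 2) + 2 * Real.exp (ξ 0 - (ξ 1 + ξ 2) / 2)) / 3 - 1 - ξ 0 := by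
  refine ⟨_, hasSum_two_le_sum_and (hasSum_zero_sum_types ξ) (by simp), ?_⟩
  have single (i : ZMod 3) : ∑ j, ((Pi.single i 1 : ZMod 3 → ℕ) j : ZMod 3) * j = i := by
    rw [Fintype.sum_eq_single i fun j hj ↦ by simp [hj]]
    simp
  have at_zero : (Complex.exp (∑ i, ZMod.stdAddChar ((0 : ZMod 3) * i) * (ξ i : ℂ))).re
      = Real.exp (ξ 0 + ξ 1 + ξ 2) := by
    simp only [zero_mul, AddChar.map_zero_eq_one, one_mul]
    rw [sum_univ_zmod_three]
    exact_mod_cast Complex.exp_ofReal_re _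
  have at_one := re_exp_stdAddChar_le (t := 1) (by decide) ξ
  have at_two := re_exp_stdAddChar_le (t := 2) (by decide) ξ
  simp only [single, sum_ite_eq', mem_univ, if_true]
  rw [sum_univ_zmod_three, at_zero]
  push_cast
  linarith

theorem hasSum_bool (ξ : Bool → ℝ) : HasSum (fun d : Bool → ℕ ↦
      if 2 ≤ ∑ i, d i ∧ d true ≠ 1 then ∏ i, ξ i ^ d i / (d i).factorial else 0)
    (Real.exp (ξ false) * (Real.exp (ξ true) - ξ true) - 1 - ξ false) := by
  let f : Bool → ℕ → ℝ
    | false, d => ξ false ^ d / d.factorial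
    | true, d => ξ true ^ d / d.factorial - if d = 1 then ξ true else 0
  let A : Bool → ℝ
    | false => Real.exp (ξ false)
    | true => Real.exp (ξ true) - ξ true
  have hf : ∀ i, HasSum (f i) (A i)
    | false => hasSum_pow_div_factorial _
    | true => (hasSum_pow_div_factorial _).sub (hasSum_ite_eq 1 _)
  have hA := hasSum_pi_prod hf fun i ↦ (hf i).summable.norm
  rw [Fintype.prod_bool, mul_comm] at hA
  have hQ : HasSum (fun d : Bool → ℕ ↦
      if d true ≠ 1 then ∏ i, ξ i ^ d i / (d i).factorial else 0) (A false * A true) := by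
    refine hA.congr_fun fun d ↦ ?_
    rw [Fintype.prod_bool, Fintype.prod_bool]
    by_cases hd : d true = 1 <;> simp [f, hd]
  convert! hasSum_two_le_sum_and hQ (by simp) using 1
  simp [A]
  ring

end TypeVectors

/-! ### Upper bounds for balanced placements -/

theorem factorial_mul_exp_le (l : ℕ) :
    (l.factorial : ℝ) * Real.exp l ≤ Real.exp 1 * (l + 1) * (l : ℝ) ^ l := by
  rcases l.eq_zero_or_pos with rfl | hl
  · simp
  have hl' : (0 : ℝ) < l := Nat.cast_pos.2 hl
  have stirling : Stirling.stirlingSeq l ≤ Real.exp 1 / √2 := by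
    obtain ⟨l, rfl⟩ := Nat.exists_eq_add_of_le' hl
    exact (Stirling.stirlingSeq'_antitone (Nat.zero_le l)).trans_eq Stirling.stirlingSeq_one
  have sqrt_le : √(l : ℝ) ≤ l + 1 := Real.sqrt_le_iff.2 ⟨by positivity, by nlinarith⟩
  rw [Stirling.stirlingSeq, Real.sqrt_mul zero_le_two, div_le_iff₀ (by positivity)] at stirling
  calc (l.factorial : ℝ) * Real.exp l
      ≤ Real.exp 1 / √2 * (√2 * √l * (l / Real.exp 1) ^ l) * Real.exp l := by gcongr
    _ = Real.exp 1 * √l * (l : ℝ) ^ l := by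
      rw [div_pow, ← Real.exp_one_pow]
      field_simp
    _ ≤ _ := by gcongr

theorem prod_factorial_mul_pow_le {ι : Type*} [Fintype ι] {c : ι → ℕ} {N : ℕ}
    (hc : ∑ i, c i = N) :
    (∏ i, ((c i).factorial : ℝ)) * (N : ℝ) ^ N
      ≤ (Real.exp 1 * (N + 1)) ^ Fintype.card ι * N.factorial * ∏ i, (c i : ℝ) ^ c i := by
  have pow_le : (N : ℝ) ^ N ≤ Real.exp N * N.factorial :=
    (div_le_iff₀ (by positivity)).1 (Real.pow_div_factorial_le_exp N N.cast_nonneg N)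
  have exp_eq : Real.exp N = ∏ i, Real.exp (c i) := by
    rw [← Real.exp_sum, ← hc, Nat.cast_sum]
  have le_N (i : ι) : c i ≤ N := hc ▸ single_le_sum (fun _ _ ↦ Nat.zero_le _) (mem_univ i)
  calc (∏ i, ((c i).factorial : ℝ)) * (N : ℝ) ^ N
      ≤ (∏ i, ((c i).factorial : ℝ)) * (Real.exp N * N.factorial) := by gcongr
    _ = N.factorial * ∏ i, ((c i).factorial * Real.exp (c i)) := by
      rw [exp_eq, prod_mul_distrib]
      ring
    _ ≤ N.factorial * ∏ i, (Real.exp 1 * (N + 1) * (c i : ℝ) ^ c i) := by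
      refine mul_le_mul_of_nonneg_left (prod_le_prod (fun _ _ ↦ by positivity) fun i _ ↦
        (factorial_mul_exp_le _).trans ?_) (by positivity)
      gcongr
      exact le_N i
    _ = _ := by
      rw [prod_mul_distrib, prod_const, card_univ]
      ring

theorem sum_fiber_eq_sum_typeCount_mul {R S V : Type*} [Fintype S] [DecidableEq V]
    [Semiring R] [Fintype R] [DecidableEq R] (y : S → R) (σ : S → V) (v : V) :
    ∑ a with σ a = v, y a = ∑ i, (typeCount y σ v i : R) * i := by
  rw [← sum_fiberwise _ y]
  refine sum_congr rfl fun i _ ↦ ?_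
  rw [sum_congr rfl fun a ha ↦ (mem_filter.1 ha).2, sum_const, filter_filter, nsmul_eq_mul]
  rfl

theorem hammingNorm_eq_fiberCard_add {S : Type*} [Fintype S] (y : S → ZMod 3) :
    hammingNorm y = fiberCard y 1 + fiberCard y 2 := by
  have total := sum_fiberCard y
  rw [sum_univ_zmod_three] at total
  have := card_filter_add_card_filter_not (s := univ) fun a ↦ y a = 0
  simp only [hammingNorm, fiberCard, card_univ] at *
  lia

section BalancedCount

variable {S V : Type*} [Fintype S] [DecidableEq S] [Fintype V] [DecidableEq V]

theorem balancedCount_eq_card_typeCount (y : S → ZMod 3) :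
    balancedCount V y = #{σ : S → V | ∀ v, 2 ≤ ∑ i, typeCount y σ v i ∧
      ∑ i, (typeCount y σ v i : ZMod 3) * i = 0} := by
  simp only [balancedCount, TwoLeFibers, fiberCard_eq_sum_typeCount y,
    sum_fiber_eq_sum_typeCount_mul, forall_and]

theorem balancedCount_mul_prod_pow_le (y : S → ZMod 3) {ξ : ZMod 3 → ℝ} (hξ : ∀ i, 0 ≤ ξ i) :
    (balancedCount V y : ℝ) * ∏ i, ξ i ^ fiberCard y i
      ≤ (∏ i, ((fiberCard y i).factorial : ℝ)) *
        ((Real.exp (ξ 0 + ξ 1 + ξ 2) + 2 * Real.exp (ξ 0 - (ξ 1 + ξ 2) / 2)) / 3 - 1 - ξ 0)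
          ^ Fintype.card V := by
  obtain ⟨Φ, hasSum, le⟩ := exists_hasSum_zmod_three ξ
  have nonneg : 0 ≤ Φ := hasSum.nonneg fun d ↦ by
    split_ifs
    exacts [prod_nonneg fun i _ ↦ div_nonneg (pow_nonneg (hξ i) _) (Nat.cast_nonneg _), le_rfl]
  rw [balancedCount_eq_card_typeCount]
  refine (card_forall_typeCount_mul_prod_pow_le y _ hξ hasSum).trans ?_
  gcongr

/-- The saddle point: each type `i` gets the share of `s` proportional to its frequency in `y`. -/
theorem balancedCount_mul_prod_share_pow_le [Nonempty S] (y : S → ZMod 3) {s : ℝ} (hs : 0 ≤ s) :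
    (balancedCount V y : ℝ) * ∏ i, (s * fiberCard y i / Fintype.card S) ^ fiberCard y i
      ≤ (∏ i, ((fiberCard y i).factorial : ℝ)) *
        ((expTail s + 2 * expTail (s * (1 - 3 * (hammingNorm y / Fintype.card S) / 2))) / 3)
          ^ Fintype.card V := by
  have card_pos : (0 : ℝ) < Fintype.card S := Nat.cast_pos.2 Fintype.card_pos
  have egf := balancedCount_mul_prod_pow_le (V := V) y
    (ξ := fun i ↦ s * fiberCard y i / Fintype.card S) fun i ↦ by positivity
  have norm_eq : (hammingNorm y : ℝ) = fiberCard y 1 + fiberCard y 2 := by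
    exact_mod_cast hammingNorm_eq_fiberCard_add y
  have zero_eq : (fiberCard y 0 : ℝ) = Fintype.card S - (fiberCard y 1 + fiberCard y 2) := by
    rw [← sum_fiberCard y, sum_univ_zmod_three]
    push_cast
    ring
  refine egf.trans_eq ?_
  simp only [zero_eq, norm_eq]
  set N : ℝ := (Fintype.card S : ℝ)
  set h : ℝ := fiberCard y 1 + fiberCard y 2 with hh
  have arg_sum : s * (N - h) / N + s * fiberCard y 1 / N + s * fiberCard y 2 / N = s := by
    rw [hh]
    field_simp
    ring
  have arg_diff : s * (N - h) / N - (s * fiberCard y 1 / N + s * fiberCard y 2 / N) / 2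
      = s * (1 - 3 * (h / N) / 2) := by
    field_simp
    ring
  have arg_zero : s * (N - h) / N = s * (1 - h / N) := by field_simp
  rw [arg_sum, arg_diff, arg_zero, expTail, expTail]
  ring

theorem balancedCount_mul_pow_le [Nonempty S] (y : S → ZMod 3) {s : ℝ} (hs : 0 ≤ s) :
    (balancedCount V y : ℝ) * s ^ Fintype.card S
      ≤ (Real.exp 1 * (Fintype.card S + 1)) ^ 3 * (Fintype.card S).factorial *
        ((expTail s + 2 * expTail (s * (1 - 3 * (hammingNorm y / Fintype.card S) / 2))) / 3)
          ^ Fintype.card V := by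
  have egf := balancedCount_mul_prod_share_pow_le (V := V) y hs
  set N := Fintype.card S
  set Φ := (expTail s + 2 * expTail (s * (1 - 3 * (hammingNorm y / N) / 2))) / 3
  have N_pos : (0 : ℝ) < N := Nat.cast_pos.2 Fintype.card_pos
  let c := fiberCard y
  have sum_c : ∑ i, c i = N := sum_fiberCard y
  have Φ_nonneg : 0 ≤ Φ := div_nonneg
    (add_nonneg (expTail_nonneg _) (mul_nonneg zero_le_two (expTail_nonneg _))) zero_le_three
  have scale : (∏ i, (s * c i / N) ^ c i) * (N : ℝ) ^ N = s ^ N * ∏ i, (c i : ℝ) ^ c i := by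
    have pow_N (z : ℝ) : z ^ N = ∏ i, z ^ c i := by rw [prod_pow_eq_pow_sum, sum_c]
    rw [pow_N, pow_N s, ← prod_mul_distrib, ← prod_mul_distrib]
    refine prod_congr rfl fun i _ ↦ ?_
    rw [← mul_pow, div_mul_cancel₀ _ N_pos.ne', mul_pow]
  have pos : 0 < ∏ i, (c i : ℝ) ^ c i := prod_pos fun i _ ↦ by
    exact_mod_cast Nat.pow_self_pos
  refine le_of_mul_le_mul_right ?_ pos
  calc balancedCount V y * s ^ N * ∏ i, (c i : ℝ) ^ c i
      = balancedCount V y * (∏ i, (s * c i / N) ^ c i) * (N : ℝ) ^ N := by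
        rw [mul_assoc, ← scale, ← mul_assoc]
    _ ≤ (∏ i, ((c i).factorial : ℝ)) * Φ ^ Fintype.card V * (N : ℝ) ^ N := by gcongr
    _ = (∏ i, ((c i).factorial : ℝ)) * (N : ℝ) ^ N * Φ ^ Fintype.card V := by ring
    _ ≤ (Real.exp 1 * (N + 1)) ^ Fintype.card (ZMod 3) * N.factorial * (∏ i, (c i : ℝ) ^ c i)
          * Φ ^ Fintype.card V := by
      exact mul_le_mul_of_nonneg_right (prod_factorial_mul_pow_le sum_c) (by positivity)
    _ = _ := by
      rw [ZMod.card]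
      ring

theorem balancedCount_le_card_typeCount_ne_one (y : S → ZMod 3) :
    balancedCount V y ≤ #{σ : S → V | ∀ v, 2 ≤ ∑ i, typeCount (fun a ↦ decide (y a ≠ 0)) σ v i ∧
      typeCount (fun a ↦ decide (y a ≠ 0)) σ v true ≠ 1} := by
  refine card_le_card fun σ hσ ↦ ?_
  obtain ⟨two_le, balanced⟩ := (mem_filter.1 hσ).2
  refine mem_filter.2 ⟨mem_univ σ, fun v ↦ ⟨?_, fun h ↦ ?_⟩⟩
  · rw [← fiberCard_eq_sum_typeCount]
    exact two_le v
  · obtain ⟨a, ha⟩ := card_eq_one.1 h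
    have mem_iff (b : S) : σ b = v ∧ y b ≠ 0 ↔ b = a := by simpa using Finset.ext_iff.1 ha b
    obtain ⟨hσa, hya⟩ := (mem_iff a).2 rfl
    refine hya ?_
    rw [← balanced v, sum_eq_single_of_mem a (by simp [hσa])]
    intro b hb hba
    by_contra hyb
    exact hba ((mem_iff b).1 ⟨(mem_filter.1 hb).2, hyb⟩)

theorem balancedCount_mul_pow_mul_choose_le (y : S → ZMod 3) {s X : ℝ} (hs : 0 ≤ s) (hX : 0 ≤ X) :
    (balancedCount V y : ℝ) * s ^ Fintype.card S *
        (X ^ hammingNorm y * (Fintype.card S).choose (hammingNorm y))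
      ≤ (Fintype.card S).factorial * s ^ hammingNorm y *
        (Real.exp s * (Real.exp X - X) - 1 - s) ^ Fintype.card V := by
  let lam (a : S) : Bool := decide (y a ≠ 0)
  have fiber_true : fiberCard lam true = hammingNorm y := by simp [fiberCard, lam, hammingNorm]
  have fiber_false : fiberCard lam false = Fintype.card S - hammingNorm y := by
    have := sum_fiberCard lam
    rw [Fintype.sum_bool, fiber_true] at this
    lia
  have le_card : hammingNorm y ≤ Fintype.card S := hammingNorm_le_card_fintype
  have egf := card_forall_typeCount_mul_prod_pow_le (V := V) lam
    (fun d ↦ 2 ≤ ∑ i, d i ∧ d true ≠ 1) (ξ := fun i ↦ cond i X s)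
    (by rintro (_ | _) <;> assumption) (hasSum_bool _)
  have le_card_typeCount : (balancedCount V y : ℝ) ≤ _ :=
    Nat.cast_le.2 (balancedCount_le_card_typeCount_ne_one y)
  simp only [Fintype.prod_bool, cond_true, cond_false, fiber_true, fiber_false] at egf
  set h := hammingNorm y
  calc balancedCount V y * s ^ Fintype.card S * (X ^ h * (Fintype.card S).choose h)
      = balancedCount V y * (X ^ h * s ^ (Fintype.card S - h)) *
          (s ^ h * (Fintype.card S).choose h) := by
        rw [← Nat.sub_add_cancel le_card, pow_add, Nat.add_sub_cancel]
        ring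
    _ ≤ _ := by
      refine mul_le_mul_of_nonneg_right ((mul_le_mul_of_nonneg_right le_card_typeCount
        (by positivity)).trans egf) (by positivity)
    _ = _ := by
      rw [← Nat.choose_mul_factorial_mul_factorial le_card]
      push_cast
      ring

end BalancedCount

theorem hammingNorm_comp_fst {J T R : Type*} [Fintype J] [Fintype T] [Zero R] [DecidableEq R]
    (y : J → R) :
    hammingNorm (fun a : J × T ↦ y a.1) = Fintype.card T * hammingNorm y := by
  rw [hammingNorm, hammingNorm, mul_comm, ← card_univ, ← card_product]
  congr 1
  ext
  simp

/-! ### Entropy and the number of words of given weight -/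

section Entropy

variable {ι α : Type*} [Fintype ι] [DecidableEq ι] [Fintype α] [DecidableEq α] [Zero α]

theorem sum_ite_eq_zero_sub_div [Nontrivial α] (p : ℝ) :
    ∑ t : α, (if t = 0 then 1 - p else p / (Fintype.card α - 1)) = 1 := by
  have card_sub_pos : (0 : ℝ) < Fintype.card α - 1 := by
    rw [sub_pos]
    exact_mod_cast Fintype.one_lt_card
  rw [Fintype.sum_eq_add_sum_compl 0, if_pos rfl,
    sum_congr rfl fun t ht ↦ if_neg (by simpa using ht), sum_const, card_compl, card_singleton,
    nsmul_eq_mul, Nat.cast_pred Fintype.card_pos]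
  field_simp
  ring

/-- The words of weight `j` have total probability at most one when the letters are independent
and nonzero with probability `p`. -/
theorem card_hammingNorm_eq_mul_pow_le_one [Nontrivial α] {p : ℝ} (hp : p ∈ Set.Icc 0 1) (j : ℕ) :
    (#{y : ι → α | hammingNorm y = j} : ℝ) *
      ((1 - p) ^ (Fintype.card ι - j) * (p / (Fintype.card α - 1)) ^ j) ≤ 1 := by
  let prob (t : α) : ℝ := if t = 0 then 1 - p else p / (Fintype.card α - 1)
  have prob_nonneg (t : α) : 0 ≤ prob t := by
    have : (1 : ℝ) ≤ Fintype.card α := by exact_mod_cast Fintype.card_pos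
    unfold prob
    split_ifs
    exacts [sub_nonneg.2 hp.2, div_nonneg hp.1 (sub_nonneg.2 this)]
  have prod_prob (y : ι → α) (hy : hammingNorm y = j) :
      ∏ i, prob (y i) = (1 - p) ^ (Fintype.card ι - j) * (p / (Fintype.card α - 1)) ^ j := by
    have := card_filter_add_card_filter_not (s := univ) fun i ↦ y i = 0
    rw [hammingNorm] at hy
    rw [prod_ite, prod_const, prod_const, hy, ← card_univ (α := ι), ← this, hy, Nat.add_sub_cancel]
  calc (#{y : ι → α | hammingNorm y = j} : ℝ) *
        ((1 - p) ^ (Fintype.card ι - j) * (p / (Fintype.card α - 1)) ^ j)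
      = ∑ y : ι → α with hammingNorm y = j, ∏ i, prob (y i) := by
        rw [sum_congr rfl fun y hy ↦ prod_prob y (mem_filter.1 hy).2, sum_const, nsmul_eq_mul]
    _ ≤ ∑ y : ι → α, ∏ i, prob (y i) :=
        sum_le_sum_of_subset_of_nonneg (filter_subset _ _) fun y _ _ ↦
          prod_nonneg fun i _ ↦ prob_nonneg _
    _ = ∏ _i : ι, ∑ t, prob t := (Fintype.prod_sum fun _ ↦ prob).symm
    _ = 1 := by
        rw [sum_ite_eq_zero_sub_div, prod_const_one]

theorem pow_mul_pow_eq_exp_neg_qaryEntropy {m j q : ℕ} (hjm : j ≤ m) (hq : 2 ≤ q) :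
    (1 - j / m : ℝ) ^ (m - j) * (j / m / (q - 1) : ℝ) ^ j
      = Real.exp (-(m * Real.qaryEntropy q (j / m))) := by
  have hq' : (0 : ℝ) < q - 1 := by
    rw [sub_pos]
    exact_mod_cast hq
  rcases j.eq_zero_or_pos with rfl | hj
  · simp
  have hm : (0 : ℝ) < m := Nat.cast_pos.2 (hj.trans_le hjm)
  have nonzero_eq : (j / m / (q - 1) : ℝ) ^ j
      = Real.exp (j * (Real.log (j / m) - Real.log (q - 1))) := by
    rw [Real.exp_nat_mul, ← Real.log_div (by positivity) hq'.ne', Real.exp_log (by positivity)]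
  have zero_eq : (1 - j / m : ℝ) ^ (m - j) = Real.exp ((m - j : ℕ) * Real.log (1 - j / m)) := by
    rcases hjm.eq_or_lt with rfl | hlt
    · simp
    · rw [Real.exp_nat_mul, Real.exp_log (sub_pos.2 ((div_lt_one hm).2 (Nat.cast_lt.2 hlt)))]
  rw [nonzero_eq, zero_eq, ← Real.exp_add, Real.qaryEntropy, Real.binEntropy, Real.log_inv,
    Real.log_inv, Nat.cast_sub hjm]
  push_cast
  congr 1
  field_simp
  ring

theorem card_hammingNorm_eq_le [Nontrivial α] {j : ℕ} (hj : j ≤ Fintype.card ι) :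
    (#{y : ι → α | hammingNorm y = j} : ℝ)
      ≤ Real.exp (Fintype.card ι * Real.qaryEntropy (Fintype.card α) (j / Fintype.card ι)) := by
  have hp : (j / Fintype.card ι : ℝ) ∈ Set.Icc 0 1 :=
    ⟨by positivity, div_le_one_of_le₀ (Nat.cast_le.2 hj) (Nat.cast_nonneg _)⟩
  have bound := card_hammingNorm_eq_mul_pow_le_one (ι := ι) (α := α) hp j
  rwa [pow_mul_pow_eq_exp_neg_qaryEntropy hj Fintype.one_lt_card, Real.exp_neg, ← div_eq_mul_inv,
    div_le_one (Real.exp_pos _)] at bound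

end Entropy

theorem qaryEntropy_le_mul_one_add_log {q : ℕ} (hq : 2 ≤ q) {p : ℝ} (hp₀ : 0 < p) (hp₁ : p < 1) :
    Real.qaryEntropy q p ≤ p * (1 + Real.log ((q - 1) / p)) := by
  have hq' : (0 : ℝ) < q - 1 := by
    rw [sub_pos]
    exact_mod_cast hq
  have one_sub_pos : 0 < 1 - p := sub_pos.2 hp₁
  have log_ge := mul_le_mul_of_nonneg_left (Real.one_sub_inv_le_log_of_pos one_sub_pos)
    one_sub_pos.le
  have : (1 - p) * (1 - (1 - p)⁻¹) = -p := by
    field_simp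
    ring
  rw [Real.qaryEntropy, Real.binEntropy, Real.log_inv, Real.log_inv,
    Real.log_div hq'.ne' hp₀.ne']
  push_cast
  linarith

theorem mul_one_add_log_div_le {c p b : ℝ} (hp : 0 < p) (hpb : p ≤ b) (hbc : b ≤ c) :
    p * (1 + Real.log (c / p)) ≤ b * (1 + Real.log (c / b)) := by
  have hb : 0 < b := hp.trans_le hpb
  have hc : 0 < c := hb.trans_le hbc
  have log_le := mul_le_mul_of_nonneg_left (Real.log_le_sub_one_of_pos (div_pos hb hp)) hp.le
  have log_nonneg : 0 ≤ Real.log (c / b) := Real.log_nonneg ((one_le_div hb).2 hbc)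
  have split : Real.log (c / p) = Real.log (c / b) + Real.log (b / p) := by
    rw [← Real.log_mul (by positivity) (by positivity)]
    congr 1
    field_simp
  have cancel : p * (b / p - 1) = b - p := by field_simp
  rw [split]
  nlinarith

/-! ### The entropy estimate -/

theorem exp_neg_natCast_le (n : ℕ) : Real.exp (-n) ≤ 0.3679 ^ n := by
  rw [← mul_neg_one, Real.exp_nat_mul]
  exact pow_le_pow_left₀ (Real.exp_pos _).le (Real.exp_neg_one_lt_d9.le.trans (by norm_num)) n

theorem exp_neg_fifteen_halves_le : Real.exp (-(15 / 2)) ≤ 1 / 1800 := by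
  refine le_of_sq_le_sq ?_ (by norm_num)
  rw [← Real.exp_nat_mul]
  have := exp_neg_natCast_le 15
  norm_num at this ⊢
  linarith

theorem expTail_ge {s : ℝ} (hs : 15 ≤ s) : 0.99 * Real.exp s ≤ expTail s := by
  have bernoulli : 1000 * (1 + s) ≤ Real.exp s := by
    have exp_15 : (100000 : ℝ) ≤ Real.exp 15 := by
      rw [← inv_inv (Real.exp 15), ← Real.exp_neg, le_inv_comm₀ (by norm_num) (Real.exp_pos _)]
      exact (exp_neg_natCast_le 15).trans (by norm_num)
    calc 1000 * (1 + s) ≤ 100000 * (s - 15 + 1) := by linarith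
      _ ≤ Real.exp 15 * Real.exp (s - 15) :=
        mul_le_mul exp_15 (Real.add_one_le_exp _) (by linarith) (Real.exp_pos _).le
      _ = Real.exp s := by rw [← Real.exp_add, add_sub_cancel]
  unfold expTail
  linarith

theorem expTail_le_sq_mul_exp_abs (v : ℝ) : expTail v ≤ v ^ 2 * Real.exp |v| := by
  have taylor := Complex.norm_exp_sub_sum_le_norm_mul_exp v 2
  have partial_sum : Complex.exp v - ∑ i ∈ range 2, (v : ℂ) ^ i / i.factorial = expTail v := by
    simp [expTail, sum_range_succ, sub_sub]
  rw [partial_sum, Complex.norm_real, Complex.norm_real, Real.norm_eq_abs, Real.norm_eq_abs,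
    sq_abs] at taylor
  exact (le_abs_self _).trans taylor

theorem expTail_le_expTail_mul_exp_sub {v s : ℝ} (hv : 0 ≤ v) (hvs : v ≤ s) :
    expTail v ≤ expTail s * Real.exp (v - s) := by
  have linear : (1 + s) * Real.exp (v - s) ≤ 1 + v := by
    rw [← neg_sub, Real.exp_neg, ← div_eq_mul_inv, div_le_iff₀ (Real.exp_pos _)]
    nlinarith [Real.add_one_le_exp (s - v)]
  have exp_eq : Real.exp s * Real.exp (v - s) = Real.exp v := by
    rw [← Real.exp_add, add_sub_cancel]
  unfold expTail
  linarith

theorem one_add_two_mul_exp_div_three_le_rpow {t T : ℝ} (ht : 0 < t) (htT : t ≤ T) :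
    (1 + 2 * Real.exp (-(3 / 2 * t))) / 3 ≤ ((1 + 2 * Real.exp (-(3 / 2 * T))) / 3) ^ (t / T) := by
  have hT : 0 < T := ht.trans_le htT
  have concave := (Real.concaveOn_rpow (p := t / T) (by positivity) ((div_le_one hT).2 htT)).2
    (Set.mem_Ici.2 zero_le_one) (Set.mem_Ici.2 (Real.exp_pos (-(3 / 2 * T))).le)
    (show (0 : ℝ) ≤ 1 / 3 by norm_num) (show (0 : ℝ) ≤ 2 / 3 by norm_num) (by norm_num)
  have exponent : -(3 / 2 * T) * (t / T) = -(3 / 2 * t) := by field_simp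
  simp only [smul_eq_mul, Real.one_rpow, ← Real.exp_mul, exponent] at concave
  calc (1 + 2 * Real.exp (-(3 / 2 * t))) / 3
      = 1 / 3 * 1 + 2 / 3 * Real.exp (-(3 / 2 * t)) := by ring
    _ ≤ (1 / 3 * 1 + 2 / 3 * Real.exp (-(3 / 2 * T))) ^ (t / T) := concave
    _ = _ := by
      congr 1
      ring

theorem le_exp_neg_qaryEntropy_of_mem_Icc {s p a T c : ℝ} (hs : 15 ≤ s) (ha : 0 < a)
    (hsp : s * p ∈ Set.Icc a T) (hT : T ≤ 5) (hc : 1 + Real.log (30 / a) ≤ 15 * c)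
    (hcT : (1 + 2 * Real.exp (-(3 / 2 * T))) / 3 ≤ Real.exp (-(c * T))) :
    (1 + 2 * Real.exp (-(3 / 2 * (s * p)))) / 3 ≤ Real.exp (-Real.qaryEntropy 3 p) := by
  obtain ⟨a_le, le_T⟩ := hsp
  have hp : 0 < p := pos_of_mul_pos_right (ha.trans_le a_le) (by linarith)
  set t := s * p with ht
  have t_pos : 0 < t := ha.trans_le a_le
  have T_pos : 0 < T := t_pos.trans_le le_T
  have p_le : p ≤ t / 15 := by
    rw [le_div_iff₀ (by norm_num), ht]
    nlinarith
  have entropy_le : Real.qaryEntropy 3 p ≤ c * t := by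
    have log_le : Real.log (2 / (t / 15)) ≤ Real.log (30 / a) := by
      refine Real.log_le_log (by positivity) ?_
      rw [div_div_eq_mul_div]
      norm_num
      gcongr
    calc Real.qaryEntropy 3 p ≤ p * (1 + Real.log (((3 : ℕ) - 1) / p)) :=
          qaryEntropy_le_mul_one_add_log (by norm_num) hp (by linarith)
      _ = p * (1 + Real.log (2 / p)) := by norm_num
      _ ≤ t / 15 * (1 + Real.log (2 / (t / 15))) := mul_one_add_log_div_le hp p_le (by linarith)
      _ ≤ t / 15 * (15 * c) := by gcongr; linarith
      _ = c * t := by ring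
  calc (1 + 2 * Real.exp (-(3 / 2 * t))) / 3
      ≤ ((1 + 2 * Real.exp (-(3 / 2 * T))) / 3) ^ (t / T) :=
        one_add_two_mul_exp_div_three_le_rpow t_pos le_T
    _ ≤ Real.exp (-(c * T)) ^ (t / T) := by gcongr
    _ = Real.exp (-(c * t)) := by
      rw [← Real.exp_mul]
      congr 1
      field_simp
    _ ≤ _ := Real.exp_le_exp.2 (neg_le_neg entropy_le)

theorem le_exp_neg_qaryEntropy_of_five_le {s p : ℝ} (hs : 0 ≤ s) (hsp : 5 ≤ s * p)
    (hp : p ≤ 1 / 3) :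
    (1 + 2 * Real.exp (-(3 / 2 * (s * p)))) / 3 ≤ Real.exp (-Real.qaryEntropy 3 p) := by
  have p_pos : 0 < p := pos_of_mul_pos_right (by linarith) hs
  have log_six : Real.log 6 = Real.log 2 + Real.log 3 := by
    rw [← Real.log_mul (by norm_num) (by norm_num)]
    norm_num
  have entropy_le : Real.qaryEntropy 3 p ≤ 1 :=
    calc Real.qaryEntropy 3 p ≤ p * (1 + Real.log (((3 : ℕ) - 1) / p)) :=
          qaryEntropy_le_mul_one_add_log (by norm_num) p_pos (by linarith)
      _ = p * (1 + Real.log (2 / p)) := by norm_num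
      _ ≤ 1 / 3 * (1 + Real.log (2 / (1 / 3))) := mul_one_add_log_div_le p_pos hp (by norm_num)
      _ ≤ 1 := by
        norm_num
        linarith [Real.log_two_lt_d9, Real.log_three_lt_d9]
  have exp_le : Real.exp (-(3 / 2 * (s * p))) ≤ Real.exp (-(15 / 2)) :=
    Real.exp_le_exp.2 (by linarith)
  refine le_trans ?_ (Real.exp_le_exp.2 (neg_le_neg entropy_le))
  linarith [exp_neg_fifteen_halves_le, Real.exp_neg_one_gt_d9]

theorem le_exp_neg_qaryEntropy {s p : ℝ} (hs : 15 ≤ s) (hsp : 1 / 20 ≤ s * p) (hp : p ≤ 1 / 3) :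
    (1 + 2 * Real.exp (-(3 / 2 * (s * p)))) / 3 ≤ Real.exp (-Real.qaryEntropy 3 p) := by
  have exp_neg_one := Real.exp_neg_one_gt_d9
  have log_15 : Real.log 15 = Real.log 3 + Real.log 5 := by
    rw [← Real.log_mul (by norm_num) (by norm_num)]
    norm_num
  rcases le_total (s * p) 2 with le_two | two_le
  · refine le_exp_neg_qaryEntropy_of_mem_Icc (c := 1 / 2) hs (by norm_num) ⟨hsp, le_two⟩
      (by norm_num) ?_ ?_
    · have log_600 : Real.log 600 = 3 * Real.log 2 + Real.log 5 + Real.log 15 := by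
        rw [← Real.log_rpow two_pos, ← Real.log_mul (by norm_num) (by norm_num),
          ← Real.log_mul (by norm_num) (by norm_num)]
        norm_num
      norm_num
      linarith [Real.log_two_lt_d9, Real.log_three_lt_d9, Real.log_five_lt_d9]
    · have := exp_neg_natCast_le 3
      norm_num at this ⊢
      linarith
  rcases le_total (s * p) 4 with le_four | four_le
  · refine le_exp_neg_qaryEntropy_of_mem_Icc (c := 1 / 4) hs two_pos ⟨two_le, le_four⟩
      (by norm_num) ?_ ?_
    · norm_num
      linarith [Real.log_three_lt_d9, Real.log_five_lt_d9]
    · have := exp_neg_natCast_le 6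
      norm_num at this ⊢
      linarith
  rcases le_total (s * p) 5 with le_five | five_le
  · refine le_exp_neg_qaryEntropy_of_mem_Icc (c := 0.21) hs four_pos ⟨four_le, le_five⟩ le_rfl
      ?_ ?_
    · have log_half : Real.log (15 / 2) = Real.log 15 - Real.log 2 :=
        Real.log_div (by norm_num) (by norm_num)
      norm_num
      linarith [Real.log_two_gt_d9, Real.log_three_lt_d9, Real.log_five_lt_d9]
    · have exp_ge : (0.3678 * 0.95 : ℝ) ≤ Real.exp (-1) * Real.exp (-0.05) :=
        mul_le_mul (by linarith) (by linarith [Real.add_one_le_exp (-0.05)]) (by norm_num)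
          (Real.exp_pos _).le
      rw [← Real.exp_add] at exp_ge
      have := exp_neg_fifteen_halves_le
      norm_num at exp_ge this ⊢
      linarith
  exact le_exp_neg_qaryEntropy_of_five_le (by linarith) five_le hp

theorem sub_one_add_sq_div_le_mul_log {x c : ℝ} (hx : 0 ≤ x) (hc : 0 < c) (hxc : x ≤ c ^ 2) :
    (x - 1) + (x - 1) ^ 2 / (c + 1) ^ 2 ≤ x * Real.log x := by
  rcases hx.eq_or_lt with rfl | x_pos
  · have : 1 / (c + 1) ^ 2 ≤ 1 := div_le_one_of_le₀ (by nlinarith) (by positivity)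
    norm_num at this ⊢
    linarith
  obtain ⟨r, r_pos, rfl⟩ : ∃ r, 0 < r ∧ r ^ 2 = x := ⟨√x, Real.sqrt_pos.2 x_pos, Real.sq_sqrt hx⟩
  have r_le : r ≤ c := le_of_sq_le_sq hxc hc.le
  have quadratic : (r ^ 2 - 1) ^ 2 / (c + 1) ^ 2 ≤ (r - 1) ^ 2 := by
    rw [div_le_iff₀ (by positivity), show (r ^ 2 - 1) ^ 2 = (r - 1) ^ 2 * (r + 1) ^ 2 by ring]
    gcongr
  have log_ge : 2 * r ^ 2 * (1 - r⁻¹) ≤ 2 * r ^ 2 * Real.log r := by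
    gcongr
    exact Real.one_sub_inv_le_log_of_pos r_pos
  have : 2 * r ^ 2 * (1 - r⁻¹) = 2 * r ^ 2 - 2 * r := by field_simp
  rw [Real.log_pow]
  push_cast
  linarith

theorem expTail_mul_le_of_abs_le_half {s θ : ℝ} (hs : 15 ≤ s) (hθ : |θ| ≤ 1 / 2) :
    expTail (s * θ) ≤ 0.18 * θ ^ 2 * expTail s := by
  have abs_le : |s * θ| ≤ s / 2 := by
    rw [abs_mul, abs_of_nonneg (by linarith)]
    nlinarith
  have exp_half : 6 * s ^ 2 ≤ Real.exp (s / 2) := by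
    have exp_ge : 1800 ≤ Real.exp (15 / 2) := by
      have := exp_neg_fifteen_halves_le
      rwa [Real.exp_neg, ← one_div, one_div_le_one_div (Real.exp_pos _) (by norm_num)] at this
    calc 6 * s ^ 2 ≤ 1800 * ((s - 15) / 4 + 1) ^ 2 := by nlinarith
      _ ≤ Real.exp (15 / 2) * Real.exp ((s - 15) / 4) ^ 2 :=
        mul_le_mul exp_ge (pow_le_pow_left₀ (by linarith) (Real.add_one_le_exp _) 2)
          (sq_nonneg _) (Real.exp_pos _).le
      _ = Real.exp (s / 2) := by
        rw [← Real.exp_nat_mul, ← Real.exp_add]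
        congr 1
        push_cast
        ring
  have exp_eq : Real.exp s = Real.exp (s / 2) * Real.exp (s / 2) := by
    rw [← Real.exp_add, add_halves]
  calc expTail (s * θ) ≤ (s * θ) ^ 2 * Real.exp (s / 2) :=
        (expTail_le_sq_mul_exp_abs _).trans (by gcongr)
    _ = θ ^ 2 * (s ^ 2 * Real.exp (s / 2)) := by ring
    _ ≤ θ ^ 2 * (0.18 * (0.99 * Real.exp s)) := by
      refine mul_le_mul_of_nonneg_left ?_ (sq_nonneg θ)
      rw [exp_eq]
      nlinarith [Real.exp_pos (s / 2)]
    _ ≤ θ ^ 2 * (0.18 * expTail s) := by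
      gcongr
      exact expTail_ge hs
    _ = _ := by ring

theorem qaryEntropy_three_eq {θ : ℝ} (hθ : θ ∈ Set.Icc (-(1 / 2)) 1) :
    Real.qaryEntropy 3 (2 * (1 - θ) / 3) = Real.log 3
      - ((1 + 2 * θ) * Real.log (1 + 2 * θ) + 2 * ((1 - θ) * Real.log (1 - θ))) / 3 := by
  have div_three_mul_log {x : ℝ} (hx : 0 ≤ x) :
      x / 3 * Real.log (x / 3) = (x * Real.log x - x * Real.log 3) / 3 := by
    rcases hx.eq_or_lt with rfl | hx
    · simp
    · rw [Real.log_div hx.ne' (by norm_num)]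
      ring
  have zero_term := div_three_mul_log (x := 1 + 2 * θ) (by linarith [hθ.1])
  have nonzero_term := div_three_mul_log (x := 1 - θ) (by linarith [hθ.2])
  have log_two_mul : 2 * (1 - θ) / 3 * Real.log (2 * (1 - θ) / 3)
      = 2 * (1 - θ) / 3 * (Real.log 2 + Real.log ((1 - θ) / 3)) := by
    rcases hθ.2.eq_or_lt with rfl | lt_one
    · simp
    · rw [mul_div_assoc, Real.log_mul two_ne_zero (div_pos (sub_pos.2 lt_one) three_pos).ne']
  rw [Real.qaryEntropy, Real.binEntropy, Real.log_inv, Real.log_inv,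
    show 1 - 2 * (1 - θ) / 3 = (1 + 2 * θ) / 3 by ring]
  norm_num
  linarith

theorem le_exp_neg_qaryEntropy_of_abs_le_half {θ : ℝ} (hθ : |θ| ≤ 1 / 2) :
    (1 + 2 * (0.18 * θ ^ 2)) / 3 ≤ Real.exp (-Real.qaryEntropy 3 (2 * (1 - θ) / 3)) := by
  obtain ⟨θ_ge, θ_le⟩ := abs_le.1 hθ
  have zero_term := sub_one_add_sq_div_le_mul_log (x := 1 + 2 * θ) (c := 1.42) (by linarith)
    (by norm_num) (by norm_num; linarith)
  have nonzero_term := sub_one_add_sq_div_le_mul_log (x := 1 - θ) (c := 1.23) (by linarith)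
    (by norm_num) (by norm_num; linarith)
  have entropy_le : 0.36 * θ ^ 2 - Real.log 3 ≤ -Real.qaryEntropy 3 (2 * (1 - θ) / 3) := by
    rw [qaryEntropy_three_eq ⟨θ_ge, by linarith⟩]
    ring_nf at zero_term nonzero_term ⊢
    norm_num at zero_term nonzero_term ⊢
    nlinarith [sq_nonneg θ]
  calc (1 + 2 * (0.18 * θ ^ 2)) / 3 ≤ Real.exp (0.36 * θ ^ 2) / 3 := by
        linarith [Real.add_one_le_exp (0.36 * θ ^ 2)]
    _ = Real.exp (0.36 * θ ^ 2 - Real.log 3) := by rw [Real.exp_sub, Real.exp_log three_pos]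
    _ ≤ _ := Real.exp_le_exp.2 entropy_le

/-- The base of the exponential saving over the trivial bound for heavy words. -/
noncomputable def savingBase : ℝ := (1 + 2 * Real.exp (-(3 / 40))) / 3

theorem savingBase_pos : 0 < savingBase := by
  unfold savingBase
  positivity

theorem savingBase_lt_one : savingBase < 1 := by
  have : Real.exp (-(3 / 40)) < 1 := Real.exp_lt_one_iff.2 (by norm_num)
  unfold savingBase
  linarith

theorem exists_mul_expTail_ge {s p : ℝ} (hs : 15 ≤ s) (hsp : 1 / 20 ≤ s * p) (hp : p ≤ 1) :
    ∃ g, 0 ≤ g ∧ (expTail s + 2 * expTail (s * (1 - 3 * p / 2))) / 3 ≤ expTail s * g ∧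
      g ≤ Real.exp (-Real.qaryEntropy 3 p) ∧ g ≤ savingBase := by
  have p_pos : 0 < p := pos_of_mul_pos_right (by linarith) (by linarith : 0 ≤ s)
  rcases le_total p (1 / 3) with le_third | third_le
  · refine ⟨(1 + 2 * Real.exp (-(3 / 2 * (s * p)))) / 3, by positivity, ?_,
      le_exp_neg_qaryEntropy hs hsp le_third, ?_⟩
    · have ratio := expTail_le_expTail_mul_exp_sub (v := s * (1 - 3 * p / 2)) (s := s)
        (by apply mul_nonneg <;> linarith) (by nlinarith)
      rw [show s * (1 - 3 * p / 2) - s = -(3 / 2 * (s * p)) by ring] at ratio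
      linarith
    · unfold savingBase
      gcongr
      linarith
  · obtain ⟨θ, rfl⟩ : ∃ θ, 2 * (1 - θ) / 3 = p := ⟨1 - 3 * p / 2, by ring⟩
    have hθ : |θ| ≤ 1 / 2 := abs_le.2 ⟨by linarith, by linarith⟩
    rw [show 1 - 3 * (2 * (1 - θ) / 3) / 2 = θ by ring]
    refine ⟨(1 + 2 * (0.18 * θ ^ 2)) / 3, by positivity, ?_,
      le_exp_neg_qaryEntropy_of_abs_le_half hθ, ?_⟩
    · linarith [expTail_mul_le_of_abs_le_half hs hθ]
    · have : θ ^ 2 ≤ 1 := by nlinarith [abs_le.1 hθ]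
      unfold savingBase
      linarith [Real.add_one_le_exp (-(3 / 40 : ℝ))]

/-! ### Heavy words -/

section Heavy

variable {k m n : ℕ} {s : ℝ}

theorem blockCount_le_saddleEstimate_mul_pow {g : ℝ} (hk : 0 < k) (hm : 0 < m) (hs : 0 < s)
    (y : Fin m → ZMod 3) (hg : (expTail s + 2 * expTail (s * (1 - 3 * (hammingNorm y / m) / 2))) / 3
      ≤ expTail s * g) :
    (blockCount k n y : ℝ)
      ≤ (Real.exp 1 * (k * m + 1)) ^ 3 * (saddleEstimate s (k * m) n * g ^ n) := by
  have : Nonempty (Fin m × Fin k) := ⟨⟨0, hm⟩, ⟨0, hk⟩⟩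
  have egf := balancedCount_mul_pow_le (V := Fin n) (fun a : Fin m × Fin k ↦ y a.1) hs.le
  have weight_ratio : ((k * hammingNorm y : ℕ) / (k * m : ℕ) : ℝ) = hammingNorm y / m := by
    push_cast
    rw [mul_div_mul_left _ _ (by positivity)]
  rw [hammingNorm_comp_fst, Fintype.card_prod, Fintype.card_fin, Fintype.card_fin, Fintype.card_fin,
    mul_comm m k, weight_ratio] at egf
  refine le_of_mul_le_mul_right (egf.trans ?_) (pow_pos hs (k * m))
  calc _ ≤ (Real.exp 1 * ((k * m : ℕ) + 1)) ^ 3 * (k * m).factorial * (expTail s * g) ^ n := by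
        gcongr
        exact div_nonneg (add_nonneg (expTail_nonneg _) (mul_nonneg zero_le_two (expTail_nonneg _)))
          zero_le_three
    _ = _ := by
      rw [saddleEstimate, mul_pow (expTail s)]
      push_cast
      field_simp

theorem sum_blockCount_le_of_heavy {j : ℕ} (hk : 0 < k) (hs : 15 ≤ s) (hjm : j ≤ m) (hmn : m ≤ n)
    (heavy : 1 / 20 ≤ s * (j / m)) :
    ∑ y : Fin m → ZMod 3 with hammingNorm y = j, (blockCount k n y : ℝ)
      ≤ (Real.exp 1 * (k * m + 1)) ^ 3 *
        (saddleEstimate s (k * m) n * savingBase ^ (n - m)) := by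
  have : Fact (1 < 3) := ⟨by norm_num⟩
  have hm : 0 < m := Nat.pos_of_ne_zero fun h ↦ by norm_num [h] at heavy
  obtain ⟨g, g_nonneg, egf_le, g_le_entropy, g_le_saving⟩ := exists_mul_expTail_ge hs heavy
    (div_le_one_of_le₀ (Nat.cast_le.2 hjm) (Nat.cast_nonneg m))
  have hs₀ : 0 < s := by linarith
  have estimate_nonneg := saddleEstimate_nonneg hs₀.le (k * m) n
  have card_mul_le : (#{y : Fin m → ZMod 3 | hammingNorm y = j} : ℝ) * g ^ m ≤ 1 := by
    have card_le := card_hammingNorm_eq_le (α := ZMod 3) (hjm.trans_eq (Fintype.card_fin m).symm)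
    rw [Fintype.card_fin, ZMod.card] at card_le
    calc _ ≤ Real.exp (m * Real.qaryEntropy 3 (j / m))
            * Real.exp (-Real.qaryEntropy 3 (j / m)) ^ m := by gcongr
      _ = 1 := by
        rw [← Real.exp_nat_mul, ← Real.exp_add, mul_neg, add_neg_cancel, Real.exp_zero]
  calc ∑ y : Fin m → ZMod 3 with hammingNorm y = j, (blockCount k n y : ℝ)
      ≤ ∑ y : Fin m → ZMod 3 with hammingNorm y = j,
          (Real.exp 1 * (k * m + 1)) ^ 3 * (saddleEstimate s (k * m) n * g ^ n) :=
        sum_le_sum fun y hy ↦ blockCount_le_saddleEstimate_mul_pow hk hm hs₀ y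
          (by rwa [(mem_filter.1 hy).2])
    _ = (Real.exp 1 * (k * m + 1)) ^ 3 * (saddleEstimate s (k * m) n *
          (#{y : Fin m → ZMod 3 | hammingNorm y = j} * g ^ m * g ^ (n - m))) := by
        rw [sum_const, nsmul_eq_mul, mul_assoc _ (g ^ m), pow_mul_pow_sub g hmn]
        ring
    _ ≤ (Real.exp 1 * (k * m + 1)) ^ 3 * (saddleEstimate s (k * m) n *
          (1 * savingBase ^ (n - m))) := by gcongr
    _ = _ := by rw [one_mul]

end Heavy

/-! ### Light words -/

theorem div_pow_le_choose {N r : ℕ} (h : r ≤ N) : ((N : ℝ) / r) ^ r ≤ N.choose r := by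
  induction r generalizing N with
  | zero => simp
  | succ r ih =>
    obtain ⟨N, rfl⟩ := Nat.exists_eq_succ_of_ne_zero (show N ≠ 0 by lia)
    have hrN : r ≤ N := by lia
    have ratio_le : ((N + 1 : ℕ) / (r + 1 : ℕ) : ℝ) ^ r ≤ (N / r : ℝ) ^ r := by
      rcases r.eq_zero_or_pos with rfl | hr
      · simp
      · have : (r : ℝ) ≤ N := Nat.cast_le.2 hrN
        gcongr ?_ ^ r
        rw [div_le_div_iff₀ (by positivity) (by positivity)]
        push_cast
        linarith
    have absorption : ((N + 1 : ℕ) : ℝ) * N.choose r = (N + 1).choose (r + 1) * (r + 1 : ℕ) := by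
      exact_mod_cast Nat.add_one_mul_choose_eq N r
    calc ((N + 1 : ℕ) / (r + 1 : ℕ) : ℝ) ^ (r + 1)
        ≤ N.choose r * ((N + 1 : ℕ) / (r + 1 : ℕ) : ℝ) := by
          rw [pow_succ]
          gcongr
          exact ratio_le.trans (ih hrN)
      _ = (N + 1).choose (r + 1) := by
          rw [mul_div_assoc', mul_comm, absorption, mul_div_cancel_right₀ _ (by positivity)]

theorem le_Qf {s : ℝ} (hs : 0 < s) : s ≤ Qf s := by
  refine le_of_mul_le_mul_right ?_ (expTail_pos hs.ne')
  rw [Qf_mul_expTail hs.ne', expTail]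
  nlinarith

theorem mul_Qf_le {s : ℝ} (hs : 15 ≤ s) : 0.99 * Qf s ≤ s := by
  have hs₀ : 0 < s := by linarith
  have Qf_pos : 0 < Qf s := hs₀.trans_le (le_Qf hs₀)
  have eq := Qf_mul_expTail hs₀.ne'
  nlinarith [expTail_ge hs, Real.exp_pos s]

theorem exp_mul_sub_sub_le {s X : ℝ} (hs : 15 ≤ s) (hX₀ : 0 ≤ X) (hX₁ : X ≤ 1) :
    Real.exp s * (Real.exp X - X) - 1 - s ≤ expTail s * Real.exp (1.02 * X ^ 2) := by
  have tail_pos : 0 < expTail s := expTail_pos (by linarith)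
  have taylor : Real.exp X - 1 - X ≤ X ^ 2 :=
    (abs_le.1 (Real.abs_exp_sub_one_sub_id_le (by rwa [abs_of_nonneg hX₀]))).2
  calc Real.exp s * (Real.exp X - X) - 1 - s = expTail s + Real.exp s * (Real.exp X - 1 - X) := by
        unfold expTail
        ring
    _ ≤ expTail s + (1.02 * expTail s) * X ^ 2 := by
        gcongr
        · linarith [Real.add_one_le_exp X]
        · linarith [expTail_ge hs]
    _ = expTail s * (1.02 * X ^ 2 + 1) := by ring
    _ ≤ _ := by
        gcongr
        exact Real.add_one_le_exp _

theorem exp_sq_le_three : Real.exp 0.51 ^ 2 ≤ 3 := by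
  have exp_small : Real.exp 0.02 ≤ 1 / 0.98 := by
    rw [le_one_div (Real.exp_pos _) (by norm_num), one_div, ← Real.exp_neg]
    linarith [Real.one_sub_le_exp_neg 0.02]
  calc Real.exp 0.51 ^ 2 = Real.exp 1 * Real.exp 0.02 := by
        rw [← Real.exp_nat_mul, ← Real.exp_add]
        norm_num
    _ ≤ 2.7182818286 * (1 / 0.98) := by
        gcongr
        exact Real.exp_one_lt_d9.le
    _ ≤ 3 := by norm_num

theorem mul_exp_le_sqrt_mul_sqrt_div {s Q p : ℝ} (hs : 0 ≤ s) (hQ : s ≤ Q) (hp : 0 < p) :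
    s * Real.exp 0.51 ≤ √(6 * (s * p)) * (√(p * Q / 2) / p) := by
  rw [← mul_div_assoc, le_div_iff₀ hp, ← Real.sqrt_mul (by positivity)]
  refine Real.le_sqrt_of_sq_le ?_
  calc (s * Real.exp 0.51 * p) ^ 2 = (s * p) ^ 2 * Real.exp 0.51 ^ 2 := by ring
    _ ≤ (s * p) ^ 2 * 3 := by
        gcongr
        exact exp_sq_le_three
    _ = 6 * (s * p) * (p * s / 2) := by ring
    _ ≤ 6 * (s * p) * (p * Q / 2) := by gcongr

theorem twelve_mul_exp_mul_pow_le_half {k : ℕ} (hk : 16 ≤ k) :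
    12 * Real.exp 1 * k * 0.548 ^ (k - 4) ≤ 1 / 2 := by
  induction k, hk using Nat.le_induction with
  | base =>
    have := Real.exp_one_lt_d9
    norm_num
    linarith
  | succ k hk ih =>
    have hk' : (16 : ℝ) ≤ k := by exact_mod_cast hk
    refine le_trans ?_ ih
    rw [Nat.sub_add_comm (by lia), pow_succ]
    calc 12 * Real.exp 1 * (k + 1 : ℕ) * (0.548 ^ (k - 4) * 0.548)
        = 12 * Real.exp 1 * ((k + 1) * 0.548) * 0.548 ^ (k - 4) := by push_cast; ring
      _ ≤ 12 * Real.exp 1 * k * 0.548 ^ (k - 4) := by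
        gcongr
        linarith

theorem two_mul_exp_div_mul_sqrt_pow_le {k : ℕ} {s p : ℝ} (hk : 16 ≤ k) (hs : 0 < s) (hsk : s ≤ k)
    (hp : 0 < p) (light : s * p ≤ 1 / 20) :
    2 * Real.exp 1 / p * √(6 * (s * p)) ^ k ≤ 3 * (s * p) := by
  set q := √(6 * (s * p))
  have q_sq : q ^ 2 = 6 * (s * p) := Real.sq_sqrt (by positivity)
  have q_le : q ≤ 0.548 := Real.sqrt_le_iff.2 ⟨by norm_num, by norm_num; linarith⟩
  have pow_eq : q ^ k = q ^ (k - 4) * (q ^ 2 * q ^ 2) := by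
    rw [← pow_add, ← pow_add]
    congr 1
    lia
  calc 2 * Real.exp 1 / p * q ^ k = 12 * Real.exp 1 * s * q ^ (k - 4) * (6 * (s * p)) := by
        rw [pow_eq, q_sq]
        field_simp
        ring
    _ ≤ 12 * Real.exp 1 * k * 0.548 ^ (k - 4) * (6 * (s * p)) := by gcongr
    _ ≤ 1 / 2 * (6 * (s * p)) := by
        gcongr
        exact twelve_mul_exp_mul_pow_le_half hk
    _ = 3 * (s * p) := by ring

section Light

variable {k m n : ℕ} {s : ℝ}

theorem blockCount_mul_pow_le_saddleEstimate {X : ℝ} (hk : 0 < k) (hs : 15 ≤ s) (hX₀ : 0 ≤ X)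
    (hX₁ : X ≤ 1) (y : Fin m → ZMod 3) :
    blockCount k n y * (X / (hammingNorm y / m)) ^ (k * hammingNorm y)
      ≤ saddleEstimate s (k * m) n *
        (s ^ (k * hammingNorm y) * Real.exp (1.02 * X ^ 2) ^ n) := by
  have hs₀ : 0 < s := by linarith
  have egf := balancedCount_mul_pow_mul_choose_le (V := Fin n) (fun a : Fin m × Fin k ↦ y a.1)
    hs₀.le hX₀
  rw [hammingNorm_comp_fst, Fintype.card_prod, Fintype.card_fin, Fintype.card_fin, Fintype.card_fin,
    mul_comm m k] at egf
  change (blockCount k n y : ℝ) * _ * _ ≤ _ at egf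
  set h := hammingNorm y
  have h_le : h ≤ m := hammingNorm_le_card_fintype.trans_eq (Fintype.card_fin m)
  have choose_ge := div_pow_le_choose (Nat.mul_le_mul_left k h_le)
  have base_nonneg : 0 ≤ Real.exp s * (Real.exp X - X) - 1 - s := by
    nlinarith [Real.add_one_le_exp X, Real.add_one_le_exp s, Real.exp_pos s]
  refine le_of_mul_le_mul_right ?_ (pow_pos hs₀ (k * m))
  calc blockCount k n y * (X / (h / m)) ^ (k * h) * s ^ (k * m)
      = blockCount k n y * s ^ (k * m) * (X ^ (k * h) * ((k * m : ℕ) / (k * h : ℕ)) ^ (k * h)) := by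
        rw [← mul_pow, Nat.cast_mul, Nat.cast_mul, mul_div_mul_left _ _ (by positivity),
          div_div_eq_mul_div, mul_div_assoc]
        ring
    _ ≤ blockCount k n y * s ^ (k * m) * (X ^ (k * h) * (k * m).choose (k * h)) := by gcongr
    _ ≤ (k * m).factorial * s ^ (k * h) * (Real.exp s * (Real.exp X - X) - 1 - s) ^ n := egf
    _ ≤ (k * m).factorial * s ^ (k * h) * (expTail s * Real.exp (1.02 * X ^ 2)) ^ n := by
        gcongr
        exact exp_mul_sub_sub_le hs hX₀ hX₁
    _ = _ := by
        rw [saddleEstimate, mul_pow (expTail s)]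
        field_simp

theorem blockCount_le_of_light (hk : 0 < k) (hs : 15 ≤ s) (hQ : n * Qf s = k * m)
    {y : Fin m → ZMod 3} (hy : y ≠ 0) (light : s * (hammingNorm y / m) ≤ 1 / 20) :
    (blockCount k n y : ℝ) ≤ saddleEstimate s (k * m) n *
      √(6 * (s * (hammingNorm y / m))) ^ (k * hammingNorm y) := by
  have hs₀ : 0 < s := by linarith
  have Qf_ge := le_Qf hs₀
  have h_pos : (0 : ℝ) < hammingNorm y := Nat.cast_pos.2 (hammingNorm_pos_iff.2 hy)
  have m_pos : (0 : ℝ) < m := h_pos.trans_le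
    (Nat.cast_le.2 (hammingNorm_le_card_fintype.trans_eq (Fintype.card_fin m)))
  set h := hammingNorm y
  set p : ℝ := h / m with hp
  have p_pos : 0 < p := by positivity
  have Qf_pos : 0 < Qf s := hs₀.trans_le Qf_ge
  set X := √(p * Qf s / 2)
  have X_pos : 0 < X := Real.sqrt_pos.2 (by positivity)
  have X_le : X ≤ 1 := Real.sqrt_le_one.2 (by nlinarith [mul_Qf_le hs])
  have exp_eq : Real.exp (1.02 * X ^ 2) ^ n = Real.exp 0.51 ^ (k * h) := by
    rw [← Real.exp_nat_mul, ← Real.exp_nat_mul, Real.sq_sqrt (by positivity)]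
    congr 1
    calc n * (1.02 * (p * Qf s / 2)) = 0.51 * p * (n * Qf s) := by ring
      _ = _ := by
        rw [hQ, hp]
        push_cast
        field_simp
  have estimate_nonneg := saddleEstimate_nonneg hs₀.le (k * m) n
  refine le_of_mul_le_mul_right ?_ (pow_pos (div_pos X_pos p_pos) (k * h))
  calc blockCount k n y * (X / p) ^ (k * h)
      ≤ saddleEstimate s (k * m) n * (s ^ (k * h) * Real.exp (1.02 * X ^ 2) ^ n) :=
        blockCount_mul_pow_le_saddleEstimate hk hs X_pos.le X_le y
    _ = saddleEstimate s (k * m) n * (s * Real.exp 0.51) ^ (k * h) := by rw [exp_eq, mul_pow]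
    _ ≤ saddleEstimate s (k * m) n * (√(6 * (s * p)) * (X / p)) ^ (k * h) := by
        gcongr _ * ?_ ^ _
        exact mul_exp_le_sqrt_mul_sqrt_div hs₀.le Qf_ge p_pos
    _ = _ := by rw [mul_pow, mul_assoc]

theorem card_hammingNorm_eq_le_pow {j : ℕ} (hj : 0 < j) (hjm : j < m) :
    (#{y : Fin m → ZMod 3 | hammingNorm y = j} : ℝ) ≤ (2 * Real.exp 1 / (j / m)) ^ j := by
  have : Fact (1 < 3) := ⟨by norm_num⟩
  have m_pos : (0 : ℝ) < m := Nat.cast_pos.2 (hj.trans hjm)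
  have card_le := card_hammingNorm_eq_le (α := ZMod 3) (hjm.le.trans_eq (Fintype.card_fin m).symm)
  rw [Fintype.card_fin, ZMod.card] at card_le
  set p : ℝ := j / m with hp
  have p_pos : 0 < p := by positivity
  have entropy_le := qaryEntropy_le_mul_one_add_log (q := 3) (by norm_num) p_pos
    ((div_lt_one m_pos).2 (Nat.cast_lt.2 hjm))
  calc _ ≤ Real.exp (m * Real.qaryEntropy 3 p) := card_le
    _ ≤ Real.exp (m * (p * (1 + Real.log (((3 : ℕ) - 1) / p)))) := by gcongr
    _ = Real.exp (j * (1 + Real.log (2 / p))) := by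
        rw [← mul_assoc, hp, mul_div_cancel₀ _ m_pos.ne']
        norm_num
    _ = (2 * Real.exp 1 / p) ^ j := by
        rw [Real.exp_nat_mul, Real.exp_add, Real.exp_log (by positivity)]
        ring

theorem sum_blockCount_le_of_light {j : ℕ} (hk : 16 ≤ k) (hs : 15 ≤ s) (hsk : s ≤ k) (hj : 0 < j)
    (hm : 0 < m) (hQ : n * Qf s = k * m) (light : s * (j / m) ≤ 1 / 20) :
    ∑ y : Fin m → ZMod 3 with hammingNorm y = j, (blockCount k n y : ℝ)
      ≤ saddleEstimate s (k * m) n * (3 * (s * (j / m))) ^ j := by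
  have hs₀ : 0 < s := by linarith
  have m_pos : (0 : ℝ) < m := Nat.cast_pos.2 hm
  have hjm : j < m := by
    have : (j / m : ℝ) < 1 := by nlinarith [show (0 : ℝ) ≤ j / m by positivity]
    exact_mod_cast (div_lt_one m_pos).1 this
  have card_le := card_hammingNorm_eq_le_pow hj hjm
  set p : ℝ := j / m with hp
  have p_pos : 0 < p := by positivity
  have estimate_nonneg := saddleEstimate_nonneg hs₀.le (k * m) n
  have pointwise (y : Fin m → ZMod 3) (hy : y ∈ ({y | hammingNorm y = j} : Finset _)) :
      (blockCount k n y : ℝ) ≤ saddleEstimate s (k * m) n * √(6 * (s * p)) ^ (k * j) := by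
    obtain rfl := (mem_filter.1 hy).2
    exact blockCount_le_of_light (by lia) hs hQ (hammingNorm_pos_iff.1 hj) light
  calc ∑ y : Fin m → ZMod 3 with hammingNorm y = j, (blockCount k n y : ℝ)
      ≤ #{y : Fin m → ZMod 3 | hammingNorm y = j} *
          (saddleEstimate s (k * m) n * √(6 * (s * p)) ^ (k * j)) := by
        rw [← nsmul_eq_mul]
        exact sum_le_card_nsmul _ _ _ pointwise
    _ ≤ (2 * Real.exp 1 / p) ^ j *
          (saddleEstimate s (k * m) n * √(6 * (s * p)) ^ (k * j)) := by gcongr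
    _ = saddleEstimate s (k * m) n * (2 * Real.exp 1 / p * √(6 * (s * p)) ^ k) ^ j := by
        rw [mul_pow, ← pow_mul]
        ring
    _ ≤ saddleEstimate s (k * m) n * (3 * (s * p)) ^ j := by
        gcongr _ * ?_ ^ _
        exact two_mul_exp_div_mul_sqrt_pow_le hk hs₀ hsk p_pos light

end Light

/-! ### The sum over all words -/

section Total

variable {k m n : ℕ} {s : ℝ}

theorem sum_eq_add_sum_hammingNorm_eq_succ {α : Type*} [Fintype α] [DecidableEq α] [Zero α]
    (f : (Fin m → α) → ℝ) :
    ∑ y, f y = f 0 + ∑ i ∈ range m, ∑ y with hammingNorm y = i + 1, f y := by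
  have maps_to (y : Fin m → α) (_ : y ∈ univ) : hammingNorm y ∈ range (m + 1) :=
    mem_range_succ_iff.2 (hammingNorm_le_card_fintype.trans_eq (Fintype.card_fin m))
  rw [← sum_fiberwise_of_maps_to maps_to, sum_range_succ', add_comm]
  simp only [hammingNorm_eq_zero, filter_eq', mem_univ, if_true, sum_singleton]

theorem add_one_mul_pow_le_half_pow (i : ℕ) : ((i : ℝ) + 1) * (3 / 20) ^ i ≤ (1 / 2) ^ i := by
  have bernoulli := one_add_mul_le_pow (show (-2 : ℝ) ≤ 7 / 3 by norm_num) i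
  calc ((i : ℝ) + 1) * (3 / 20) ^ i ≤ (1 + 7 / 3) ^ i * (3 / 20) ^ i := by
        gcongr
        linarith [Nat.cast_nonneg (α := ℝ) i]
    _ = (1 / 2) ^ i := by
        rw [← mul_pow]
        norm_num

theorem sum_blockCount_hammingNorm_eq_succ_le (hk : 16 ≤ k) (hs : 15 ≤ s) (hsk : s ≤ k)
    (hmn : m ≤ n) (hQ : n * Qf s = k * m) {i : ℕ} (hi : i < m) :
    ∑ y : Fin m → ZMod 3 with hammingNorm y = i + 1, (blockCount k n y : ℝ)
      ≤ saddleEstimate s (k * m) n *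
        (3 * k / m * (1 / 2) ^ i + (Real.exp 1 * (k * m + 1)) ^ 3 * savingBase ^ (n - m)) := by
  have hs₀ : 0 < s := by linarith
  have estimate_nonneg := saddleEstimate_nonneg hs₀.le (k * m) n
  have saving_pos := savingBase_pos
  rw [mul_add]
  rcases le_total (s * ((i + 1 : ℕ) / m)) (1 / 20) with light | heavy
  · refine le_add_of_le_of_nonneg ?_ (by positivity)
    calc _ ≤ saddleEstimate s (k * m) n * (3 * (s * ((i + 1 : ℕ) / m))) ^ (i + 1) :=
          sum_blockCount_le_of_light hk hs hsk i.succ_pos (by lia) hQ light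
      _ ≤ saddleEstimate s (k * m) n * ((3 / 20) ^ i * (3 * (k * ((i + 1 : ℕ) / m)))) := by
          rw [pow_succ]
          gcongr
          linarith
      _ = saddleEstimate s (k * m) n * (3 * k / m * ((i + 1) * (3 / 20) ^ i)) := by
          push_cast
          ring
      _ ≤ _ := by
          gcongr
          exact add_one_mul_pow_le_half_pow i
  · refine le_add_of_nonneg_of_le (by positivity) ?_
    rw [mul_left_comm]
    exact sum_blockCount_le_of_heavy (by lia) hs hi hmn heavy

theorem sum_blockCount_le (hk : 16 ≤ k) (hs : 15 ≤ s) (hsk : s ≤ k) (hmn : m ≤ n)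
    (hQ : n * Qf s = k * m) :
    ∑ y : Fin m → ZMod 3, (blockCount k n y : ℝ) ≤ M (k * m) n + saddleEstimate s (k * m) n *
      (6 * k / m + m * ((Real.exp 1 * (k * m + 1)) ^ 3 * savingBase ^ (n - m))) := by
  have estimate_nonneg := saddleEstimate_nonneg (by linarith : 0 ≤ s) (k * m) n
  rw [sum_eq_add_sum_hammingNorm_eq_succ, blockCount_zero]
  gcongr
  calc _ ≤ ∑ i ∈ range m, saddleEstimate s (k * m) n *
          (3 * k / m * (1 / 2) ^ i + (Real.exp 1 * (k * m + 1)) ^ 3 * savingBase ^ (n - m)) :=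
        sum_le_sum fun i hi ↦
          sum_blockCount_hammingNorm_eq_succ_le hk hs hsk hmn hQ (mem_range.1 hi)
    _ = saddleEstimate s (k * m) n * (3 * k / m * ∑ i ∈ range m, (1 / 2) ^ i
          + m * ((Real.exp 1 * (k * m + 1)) ^ 3 * savingBase ^ (n - m))) := by
        rw [← mul_sum, sum_add_distrib, ← mul_sum, sum_const, card_range, nsmul_eq_mul]
    _ ≤ saddleEstimate s (k * m) n * (3 * k / m * 2
          + m * ((Real.exp 1 * (k * m + 1)) ^ 3 * savingBase ^ (n - m))) := by
        gcongr
        exact sum_geometric_two_le m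
    _ = _ := by ring

theorem mul_add_saving_le {ε B : ℝ} (hε : 0 ≤ ε) (hm : 0 < m) (hmn : (m : ℝ) ≤ (1 - ε) * n)
    (h2n : 2 * n ≤ k * m) (hB : (n : ℝ) ^ 5 * (savingBase ^ ε) ^ n ≤ B) :
    n * (6 * k / m + m * ((Real.exp 1 * (k * m + 1)) ^ 3 * savingBase ^ (n - m)))
      ≤ 3 * k ^ 2 + (Real.exp 1 * (k + 1)) ^ 3 * B := by
  have saving_pos := savingBase_pos
  have m_pos : (0 : ℝ) < m := Nat.cast_pos.2 hm
  have m_le : (m : ℝ) ≤ n := by nlinarith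
  have m_ge : (1 : ℝ) ≤ m := by exact_mod_cast hm
  have light_le : n * (6 * k / m) ≤ 3 * (k : ℝ) ^ 2 := by
    have : (2 * n : ℝ) ≤ k * m := by exact_mod_cast h2n
    rw [mul_div_assoc', div_le_iff₀ m_pos]
    nlinarith
  have saving_le : savingBase ^ (n - m) ≤ (savingBase ^ ε) ^ n := by
    rw [← Real.rpow_natCast, ← Real.rpow_natCast, ← Real.rpow_mul saving_pos.le]
    refine Real.rpow_le_rpow_of_exponent_ge saving_pos savingBase_lt_one.le ?_
    rw [Nat.cast_sub (by exact_mod_cast m_le)]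
    linarith
  have heavy_le : n * (m * ((Real.exp 1 * (k * m + 1)) ^ 3 * savingBase ^ (n - m)))
      ≤ (Real.exp 1 * (k + 1)) ^ 3 * B :=
    calc _ ≤ n * (n * ((Real.exp 1 * (k * n + n)) ^ 3 * (savingBase ^ ε) ^ n)) := by
          gcongr
          linarith
      _ = (Real.exp 1 * (k + 1)) ^ 3 * ((n : ℝ) ^ 5 * (savingBase ^ ε) ^ n) := by ring
      _ ≤ _ := by gcongr
  linarith

theorem sum_blockCount_le_mul_M {ε B : ℝ} (hk : 16 ≤ k) (hε : 0 < ε) (hs : 15 ≤ s) (hm : 0 < m)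
    (hmn : (m : ℝ) ≤ (1 - ε) * n) (h2n : 2 * n ≤ k * m) (hQ : n * Qf s = k * m)
    (hB : (n : ℝ) ^ 5 * (savingBase ^ ε) ^ n ≤ B) :
    ∑ y : Fin m → ZMod 3, (blockCount k n y : ℝ) ≤ (1 + (1 + k * Real.exp (2 * k)) *
      (3 * k ^ 2 + (Real.exp 1 * (k + 1)) ^ 3 * B)) * M (k * m) n := by
  have hs₀ : 0 < s := by linarith
  have n_pos : (0 : ℝ) < n := Nat.cast_pos.2 <| Nat.pos_of_ne_zero fun h ↦ by
    simp [h, hm.ne'] at hmn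
  have m_lt : (m : ℝ) < n := by nlinarith
  have hmn' : m < n := by exact_mod_cast m_lt
  have s_le : s ≤ k := by
    refine le_of_mul_le_mul_left ?_ n_pos
    calc n * s ≤ n * Qf s := by
          gcongr
          exact le_Qf hs₀
      _ = k * m := hQ
      _ ≤ n * k := by
          rw [mul_comm]
          gcongr
  have saving_pos := savingBase_pos
  have estimate_le := saddleEstimate_le_M hs₀ (show 2 ≤ n by lia) h2n
    (Nat.mul_le_mul_left k hmn'.le) (by exact_mod_cast hQ)
  calc _ ≤ M (k * m) n + saddleEstimate s (k * m) n *
          (6 * k / m + m * ((Real.exp 1 * (k * m + 1)) ^ 3 * savingBase ^ (n - m))) :=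
        sum_blockCount_le hk hs s_le hmn'.le hQ
    _ ≤ M (k * m) n + M (k * m) n * (n * (1 + k * Real.exp (2 * k))) *
          (6 * k / m + m * ((Real.exp 1 * (k * m + 1)) ^ 3 * savingBase ^ (n - m))) := by gcongr
    _ = M (k * m) n + M (k * m) n * (1 + k * Real.exp (2 * k)) * (n *
          (6 * k / m + m * ((Real.exp 1 * (k * m + 1)) ^ 3 * savingBase ^ (n - m)))) := by ring
    _ ≤ M (k * m) n + M (k * m) n * (1 + k * Real.exp (2 * k)) *
          (3 * k ^ 2 + (Real.exp 1 * (k + 1)) ^ 3 * B) := by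
        gcongr
        exact mul_add_saving_le hε.le hm hmn h2n hB
    _ = _ := by ring

end Total

theorem exists_pow_mul_pow_le {r : ℝ} (h₀ : 0 ≤ r) (h₁ : r < 1) (d : ℕ) :
    ∃ B : ℝ, 0 ≤ B ∧ ∀ n : ℕ, (n : ℝ) ^ d * r ^ n ≤ B := by
  obtain ⟨B, hB⟩ := (tendsto_pow_const_mul_const_pow_of_abs_lt_one d
    (by rwa [abs_of_nonneg h₀])).bddAbove_range
  have le_B (n : ℕ) : (n : ℝ) ^ d * r ^ n ≤ B := hB ⟨n, rfl⟩
  exact ⟨B, (by positivity : (0 : ℝ) ≤ (0 : ℕ) ^ d * r ^ 0).trans (le_B 0), le_B⟩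

theorem stmt12 (k : ℕ) (hk : 16 ≤ k) (ε : ℝ) (hε : ε ∈ Set.Ioo (0:ℝ) 1) :
    ∃ C : ℝ, 0 < C ∧
      ∀ n m : ℕ, 0 < n → 0 < m → (m : ℝ) ≤ (1 - ε) * (n : ℝ) →
        2 < (k : ℝ) * (m : ℝ) / (n : ℝ) →
        ∀ s : ℝ, 0 < s → Qf s = (k : ℝ) * (m : ℝ) / (n : ℝ) → 15 ≤ s →
          (∑ w ∈ Finset.Nat.antidiagonalTuple 3 n,
            ∑ l ∈ Finset.Nat.antidiagonalTuple 3 (k * m),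
              (Nwl k m w l : ℝ) / (M (k * m) n : ℝ))
            ≤ C * (3:ℝ) ^ ((n : ℝ) - (m : ℝ)) := by
  have saving_pos := savingBase_pos
  obtain ⟨B, B_nonneg, hB⟩ := exists_pow_mul_pow_le (by positivity)
    (Real.rpow_lt_one saving_pos.le savingBase_lt_one hε.1) 5
  refine ⟨1 + (1 + k * Real.exp (2 * k)) * (3 * k ^ 2 + (Real.exp 1 * (k + 1)) ^ 3 * B),
    by positivity, fun n m hn hm hmn hratio s _ hQ hs ↦ ?_⟩
  have n_pos : (0 : ℝ) < n := Nat.cast_pos.2 hn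
  have h2n : 2 * n ≤ k * m := by exact_mod_cast ((lt_div_iff₀ n_pos).1 hratio).le
  have mean_eq : n * Qf s = k * m := by rw [hQ, mul_div_cancel₀ _ n_pos.ne']
  have bound := sum_blockCount_le_mul_M hk hε.1 hs hm hmn h2n mean_eq (hB n)
  have duality : (∑ w ∈ Finset.Nat.antidiagonalTuple 3 n,
      ∑ l ∈ Finset.Nat.antidiagonalTuple 3 (k * m), (Nwl k m w l : ℝ)) * 3 ^ m
        = 3 ^ n * ∑ y : Fin m → ZMod 3, (blockCount k n y : ℝ) := by
    exact_mod_cast sum_Nwl_mul_three_pow k m n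
  simp_rw [← Finset.sum_div]
  refine div_le_of_le_mul₀ (Nat.cast_nonneg _) (by positivity) ?_
  rw [Real.rpow_sub three_pos, Real.rpow_natCast, Real.rpow_natCast, mul_right_comm,
    mul_div_assoc', le_div_iff₀ (by positivity), duality, mul_comm]
  gcongr
end
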